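/- arXiv:2507.07279 — 2 statements merged into one kernel-verified Lean document; each statement's English description precedes it below -/
import Mathlib

section
/- Let n ≥ 1 and let f : ℝ^{2n+1} → ℝ^{2n+1} be a diffeomorphism that is connected to the identity by a smooth path of diffeomorphisms. Then there exists a null smooth path of diffeomorphisms (g_t)_{t∈[0,1]} of ℝ^{2n+1} with g_0 = id and g_1 = f. -/
open Set Function

noncomputable section

/-- `ℝ^{2n+1}` with coordinates `(x, y, z) ∈ ℝⁿ × ℝⁿ × ℝ`. -/
abbrev E (n : ℕ) : Type := (Fin n → ℝ) × (Fin n → ℝ) × ℝ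

/-- The standard contact form `α₀ = dz + ∑ xᵢ dyᵢ`: at the point `p = (x,y,z)` it sends the
vector `v = (u,w,c)` to `c + ∑ xᵢ wᵢ`. -/
def α₀ (n : ℕ) (p v : E n) : ℝ := v.2.2 + ∑ i, p.1 i * v.2.1 i

/-- A diffeomorphism of `ℝ^{2n+1}`: a smooth bijection with smooth inverse. -/
def IsDiffeo (n : ℕ) (f : E n → E n) : Prop :=
  ContDiff ℝ (⊤ : ℕ∞) f ∧ ∃ g : E n → E n, ContDiff ℝ (⊤ : ℕ∞) g ∧ LeftInverse g f ∧ RightInverse g f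

/-- A smooth path of diffeomorphisms, parametrized by `t ∈ [0,1]` (smoothly extended to `ℝ`):
a smooth map such that `g_t := g(t,·)` is a diffeomorphism for every `t ∈ [0,1]`. -/
def IsSmoothPath (n : ℕ) (g : ℝ × E n → E n) : Prop :=
  ContDiff ℝ (⊤ : ℕ∞) g ∧ ∀ t ∈ Icc (0:ℝ) 1, IsDiffeo n (fun p => g (t, p))

/-- The time derivative `∂ₜ g(t,q)` of a path. -/
def pathDeriv (n : ℕ) (g : ℝ × E n → E n) (t : ℝ) (q : E n) : E n :=
  deriv (fun s => g (s, q)) t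

/-- A path is positive if `α₀(g(t,q))(∂ₜ g(t,q)) > 0` for all `t ∈ [0,1]` and all `q`. -/
def IsPositivePath (n : ℕ) (g : ℝ × E n → E n) : Prop :=
  ∀ t ∈ Icc (0:ℝ) 1, ∀ q, 0 < α₀ n (g (t, q)) (pathDeriv n g t q)

/-- A path is null if `α₀(g(t,q))(∂ₜ g(t,q)) = 0` for all `t ∈ [0,1]` and all `q`. -/
def IsNullPath (n : ℕ) (g : ℝ × E n → E n) : Prop :=
  ∀ t ∈ Icc (0:ℝ) 1, ∀ q, α₀ n (g (t, q)) (pathDeriv n g t q) = 0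

/-- A path is compactly supported if all `g(t,·)` are the identity outside a fixed compact set. -/
def IsCompactlySupportedPath (n : ℕ) (g : ℝ × E n → E n) : Prop :=
  ∃ K : Set (E n), IsCompact K ∧ ∀ t ∈ Icc (0:ℝ) 1, ∀ p ∉ K, g (t, p) = p

/-- `f` is connected to the identity by a smooth path of diffeomorphisms. -/
def ConnToId (n : ℕ) (f : E n → E n) : Prop :=
  ∃ g : ℝ × E n → E n, IsSmoothPath n g ∧ (∀ p, g (0, p) = p) ∧ (∀ p, g (1, p) = f p)

/-- `f` is connected to the identity by a compactly supported smooth path of diffeomorphisms. -/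
def ConnToIdCompactlySupported (n : ℕ) (f : E n → E n) : Prop :=
  ∃ g : ℝ × E n → E n, IsSmoothPath n g ∧ IsCompactlySupportedPath n g ∧
    (∀ p, g (0, p) = p) ∧ (∀ p, g (1, p) = f p)


open Filter Topology Metric
open scoped NNReal ContDiff Manifold

theorem isDiffeo_id (n : ℕ) : IsDiffeo n (fun p => p) :=
  ⟨contDiff_id, fun p => p, contDiff_id, fun _ => rfl, fun _ => rfl⟩

theorem IsDiffeo.comp' {n : ℕ} {f g : E n → E n} (hf : IsDiffeo n f) (hg : IsDiffeo n g) :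
    IsDiffeo n (fun p => f (g p)) := by
  obtain ⟨hf, f', hf', hfl, hfr⟩ := hf
  obtain ⟨hg, g', hg', hgl, hgr⟩ := hg
  refine ⟨hf.comp hg, fun p => g' (f' p), hg'.comp hf', fun p => ?_, fun p => ?_⟩
  · change g' (f' (f (g p))) = p
    rw [hfl, hgl]
  · change f (g (g' (f' p))) = p
    rw [hgr, hfr]

theorem isDiffeo_id_add {n : ℕ} {v : E n → E n} (hv : ContDiff ℝ (⊤ : ℕ∞) v)
    (hL : ∀ q, ‖fderiv ℝ v q‖ ≤ 1 / 2) : IsDiffeo n (fun q => q + v q) := by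
  have hvd : Differentiable ℝ v := hv.differentiable (by simp)
  have hlip : LipschitzWith (1 / 2 : ℝ≥0) v := by
    apply lipschitzWith_of_nnnorm_fderiv_le hvd
    intro q
    rw [← NNReal.coe_le_coe]
    simpa using hL q
  have hsm : ContDiff ℝ (⊤ : ℕ∞) (fun q => q + v q) := contDiff_id.add hv
  have happ : ApproximatesLinearOn (fun q => q + v q)
      ((ContinuousLinearEquiv.refl ℝ (E n) : E n ≃L[ℝ] E n) : E n →L[ℝ] E n) univ (1 / 2 : ℝ≥0) := by
    intro x _ y _
    have := hlip.dist_le_mul x y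
    rw [dist_eq_norm, dist_eq_norm] at this
    have e : x + v x - (y + v y) - (x - y) = v x - v y := by abel
    change ‖x + v x - (y + v y) - (x - y)‖ ≤ _
    rw [e]; exact this
  have hc : Subsingleton (E n) ∨ (1 / 2 : ℝ≥0) <
      ‖(((ContinuousLinearEquiv.refl ℝ (E n)).symm : E n ≃L[ℝ] E n) : E n →L[ℝ] E n)‖₊⁻¹ := by
    right
    have : ‖(((ContinuousLinearEquiv.refl ℝ (E n)).symm : E n ≃L[ℝ] E n) : E n →L[ℝ] E n)‖₊ = 1 := by
      ext
      have := ContinuousLinearMap.norm_id (𝕜 := ℝ) (E := E n)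
      simpa using this
    rw [this, inv_one]
    rw [← NNReal.coe_lt_coe]; norm_num
  let Hm : E n ≃ₜ E n := happ.toHomeomorph _ hc
  have hH : ∀ q, Hm q = q + v q := fun q => rfl
  have hder : ∀ q, ∃ L : E n ≃L[ℝ] E n, HasFDerivAt Hm (L : E n →L[ℝ] E n) q := by
    intro q
    have h1 : ‖-(fderiv ℝ v q)‖ < 1 := by
      rw [norm_neg]; exact lt_of_le_of_lt (hL q) (by norm_num)
    refine ⟨ContinuousLinearEquiv.ofUnit (Units.oneSub _ h1), ?_⟩
    have h2 : HasFDerivAt (fun q => q + v q) (ContinuousLinearMap.id ℝ (E n) + fderiv ℝ v q) q :=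
      (hasFDerivAt_id q).add (hvd q).hasFDerivAt
    have e : ((ContinuousLinearEquiv.ofUnit (Units.oneSub _ h1) : E n ≃L[ℝ] E n) : E n →L[ℝ] E n)
        = ContinuousLinearMap.id ℝ (E n) + fderiv ℝ v q := by
      apply ContinuousLinearMap.ext
      intro w
      change (1 - -(fderiv ℝ v q)) w = _
      rw [sub_neg_eq_add]; rfl
    rw [e]
    exact h2
  choose L hLd using hder
  refine ⟨hsm, Hm.symm, Hm.contDiff_symm hLd hsm, ?_, ?_⟩
  · intro q; exact Hm.symm_apply_apply q
  · intro q; exact Hm.apply_symm_apply q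

theorem exists_bump {n : ℕ} {K U : Set (E n)} (hK : IsCompact K) (hU : IsOpen U) (hKU : K ⊆ U) :
    ∃ (χ : E n → ℝ) (L : Set (E n)), ContDiff ℝ (⊤ : ℕ∞) χ ∧ IsCompact L ∧ L ⊆ U ∧
      (∀ q ∈ K, ∀ᶠ p in 𝓝 q, χ p = 1) ∧ ∀ q ∉ L, χ q = 0 := by
  obtain ⟨L, hL, hKL, hLU⟩ := exists_compact_between hK hU hKU
  obtain ⟨f, h1, h0, -⟩ := exists_contMDiffMap_one_nhds_of_subset_interior (n := (⊤ : ℕ∞))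
    𝓘(ℝ, E n) hK.isClosed hKL
  refine ⟨f, L, f.contMDiff.contDiff, hL, hLU, fun q hq => ?_, h0⟩
  exact (eventually_nhdsSet_iff_forall.1 h1) q hq

theorem tube_small {n : ℕ} {K : Set (E n)} (hK : IsCompact K) {s : ℝ}
    {Ψ : ℝ × (ℝ × E n) → E n} (hΨ : ContDiff ℝ (⊤ : ℕ∞) Ψ) (h0 : ∀ τ q, Ψ (s, τ, q) = 0)
    (hsupp : ∀ t τ q, q ∉ K → Ψ (t, τ, q) = 0) :
    ∀ᶠ t in 𝓝 s, ∀ τ ∈ Icc (0:ℝ) 1, IsDiffeo n (fun q => q + Ψ (t, τ, q)) := by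
  have hsl : ∀ t τ, ContDiff ℝ (⊤ : ℕ∞) (fun q => Ψ (t, τ, q)) := fun t τ =>
    hΨ.comp (contDiff_const.prodMk (contDiff_const.prodMk contDiff_id))
  let ι : E n →L[ℝ] ℝ × (ℝ × E n) :=
    (ContinuousLinearMap.inr ℝ ℝ (ℝ × E n)).comp (ContinuousLinearMap.inr ℝ ℝ (E n))
  have hD : ∀ t τ q, fderiv ℝ (fun q => Ψ (t, τ, q)) q = (fderiv ℝ Ψ (t, τ, q)).comp ι := by
    intro t τ q
    have h1 : HasFDerivAt (fun q : E n => ((t, τ, q) : ℝ × (ℝ × E n))) ι q := by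
      exact (hasFDerivAt_const (𝕜 := ℝ) t q).prodMk
        ((hasFDerivAt_const (𝕜 := ℝ) τ q).prodMk (hasFDerivAt_id (𝕜 := ℝ) q))
    exact (((hΨ.differentiable (by simp)) (t, τ, q)).hasFDerivAt.comp q h1).fderiv
  have hcont : Continuous (fun z : ℝ × (ℝ × E n) => ‖(fderiv ℝ Ψ z).comp ι‖) := by
    have := hΨ.continuous_fderiv (by simp)
    exact (this.clm_comp continuous_const).norm
  have hev : ∀ᶠ t in 𝓝 s, ∀ y ∈ Icc (0:ℝ) 1 ×ˢ K,
      ‖(fderiv ℝ Ψ (t, y)).comp ι‖ < 1 / 2 := by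
    apply (isCompact_Icc.prod hK).eventually_forall_of_forall_eventually
      (P := fun t y => ‖(fderiv ℝ Ψ (t, y)).comp ι‖ < 1 / 2)
    rintro ⟨τ, q⟩ -
    have : ‖(fderiv ℝ Ψ (s, τ, q)).comp ι‖ < 1 / 2 := by
      rw [← hD]
      have : (fun q => Ψ (s, τ, q)) = fun _ => 0 := funext fun q => h0 τ q
      rw [this]; simp
    exact hcont.continuousAt.eventually_lt continuousAt_const this
  filter_upwards [hev] with t ht τ hτ
  apply isDiffeo_id_add (hsl t τ)
  intro q
  by_cases hq : q ∈ K
  · rw [hD]; exact (ht (τ, q) ⟨hτ, hq⟩).le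
  · have : (fun q => Ψ (t, τ, q)) =ᶠ[𝓝 q] fun _ => 0 := by
      filter_upwards [hK.isClosed.isOpen_compl.mem_nhds hq] with p hp
      exact hsupp t τ p hp
    rw [this.fderiv_eq]; simp

def NullAll (n : ℕ) (P : ℝ × E n → E n) : Prop :=
  ∀ t q, α₀ n (P (t, q)) (pathDeriv n P t q) = 0

theorem alpha_smul (n : ℕ) (p v : E n) (c : ℝ) : α₀ n p (c • v) = c * α₀ n p v := by
  simp only [α₀, Prod.smul_snd, Prod.smul_fst, Pi.smul_apply, smul_eq_mul, mul_add, Finset.mul_sum]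
  congr 1
  apply Finset.sum_congr rfl
  intros; ring

theorem alpha_zero (n : ℕ) (p : E n) : α₀ n p 0 = 0 := by
  simp [α₀]

theorem pathDeriv_congr {n : ℕ} {P Q : ℝ × E n → E n} {t : ℝ} {q q' : E n}
    (h : ∀ᶠ s in 𝓝 t, P (s, q) = Q (s, q')) : pathDeriv n P t q = pathDeriv n Q t q' :=
  Filter.EventuallyEq.deriv_eq h

theorem null_congr {n : ℕ} {P Q : ℝ × E n → E n} {t : ℝ} {q q' : E n}
    (h : ∀ᶠ s in 𝓝 t, P (s, q) = Q (s, q')) (hQ : α₀ n (Q (t, q')) (pathDeriv n Q t q') = 0) :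
    α₀ n (P (t, q)) (pathDeriv n P t q) = 0 := by
  rw [pathDeriv_congr h, h.self_of_nhds, hQ]

theorem null_reparam {n : ℕ} {P : ℝ × E n → E n} (hP : ContDiff ℝ (⊤ : ℕ∞) P)
    {κ : ℝ → ℝ} (hκ : ContDiff ℝ (⊤ : ℕ∞) κ) {t : ℝ} {q : E n}
    (h : α₀ n (P (κ t, q)) (pathDeriv n P (κ t) q) = 0) :
    α₀ n (P (κ t, q)) (pathDeriv n (fun z => P (κ z.1, z.2)) t q) = 0 := by
  have h1 : DifferentiableAt ℝ (fun s => P (s, q)) (κ t) :=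
    ((hP.comp (contDiff_id.prodMk contDiff_const)).differentiable (by simp)) _
  have h2 : DifferentiableAt ℝ κ t := (hκ.differentiable (by simp)) _
  have : pathDeriv n (fun z => P (κ z.1, z.2)) t q = deriv κ t • pathDeriv n P (κ t) q := by
    exact (h1.hasDerivAt.scomp t h2.hasDerivAt).deriv
  rw [this, alpha_smul, h, mul_zero]

theorem glue_null {n : ℕ} {G P : ℝ × E n → E n} {H Hi : E n → E n}
    (hl : LeftInverse Hi H) (hr : RightInverse Hi H) {a b : ℝ} (hba : b < a)
    (hG : NullAll n G) (hP : NullAll n P) (hGb : ∀ t, b ≤ t → ∀ q, G (t, q) = H q)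
    (hPa : ∀ t ≤ a, ∀ q, P (t, q) = H q) :
    NullAll n (fun z => P (z.1, Hi (G z))) := by
  intro t q
  rcases lt_or_ge t a with h | h
  · refine null_congr (Q := G) (q' := q) ?_ (hG t q)
    filter_upwards [Iio_mem_nhds h] with s hs
    rw [hPa s (le_of_lt hs), hr]
  · refine null_congr (Q := P) (q' := q) ?_ (hP t q)
    filter_upwards [Ioi_mem_nhds (lt_of_lt_of_le hba h)] with s hs
    rw [hGb s (le_of_lt hs), hl]

/-- `φ` and `ψ` are joined by a null path of diffeomorphisms, stationary off `U`. -/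
def NConn (n : ℕ) (U : Set (E n)) (φ ψ : E n → E n) : Prop :=
  ∃ P : ℝ × E n → E n, ContDiff ℝ (⊤ : ℕ∞) P ∧ (∀ t, IsDiffeo n (fun p => P (t, p))) ∧
    NullAll n P ∧ (∀ t ≤ 0, ∀ q, P (t, q) = φ q) ∧ (∀ t, 1 ≤ t → ∀ q, P (t, q) = ψ q) ∧
    ∀ t, ∀ q ∉ U, P (t, q) = φ q

theorem NConn.left {n : ℕ} {U : Set (E n)} {φ ψ : E n → E n} (h : NConn n U φ ψ) :
    IsDiffeo n φ := by
  obtain ⟨P, -, h2, -, h4, -⟩ := h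
  have := h2 0
  rwa [show (fun p => P (0, p)) = φ from funext fun q => h4 0 le_rfl q] at this

theorem NConn.right {n : ℕ} {U : Set (E n)} {φ ψ : E n → E n} (h : NConn n U φ ψ) :
    IsDiffeo n ψ := by
  obtain ⟨P, -, h2, -, -, h4, -⟩ := h
  have := h2 1
  rwa [show (fun p => P (1, p)) = ψ from funext fun q => h4 1 le_rfl q] at this

theorem NConn.symm {n : ℕ} {U : Set (E n)} {φ ψ : E n → E n} (h : NConn n U φ ψ) :
    NConn n U ψ φ := by
  obtain ⟨P, h1, h2, h3, h4, h5, h6⟩ := h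
  have hκ : ContDiff ℝ (⊤ : ℕ∞) (fun t : ℝ => 1 - t) := contDiff_const.sub contDiff_id
  refine ⟨fun z => P (1 - z.1, z.2), ?_, fun t => h2 (1 - t), fun t q => ?_, fun t ht q => ?_,
    fun t ht q => ?_, fun t q hq => ?_⟩
  · exact h1.comp ((contDiff_const.sub contDiff_fst).prodMk contDiff_snd)
  · exact null_reparam h1 hκ (h3 _ q)
  · exact h5 _ (by linarith) q
  · exact h4 _ (by linarith) q
  · change P (1 - t, q) = ψ q
    rw [h6 _ q hq, ← h5 1 le_rfl q, h6 _ q hq]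

theorem NConn.trans {n : ℕ} {U : Set (E n)} {φ ψ ξ : E n → E n} (h : NConn n U φ ψ)
    (h' : NConn n U ψ ξ) : NConn n U φ ξ := by
  obtain ⟨-, ψi, hψi, hl, hr⟩ := h.right
  obtain ⟨P, h1, h2, h3, h4, h5, h6⟩ := h
  obtain ⟨P', h1', h2', h3', h4', h5', h6'⟩ := h'
  have hκ : ContDiff ℝ (⊤ : ℕ∞) (fun t : ℝ => 3 * t) := contDiff_const.mul contDiff_id
  have hκ' : ContDiff ℝ (⊤ : ℕ∞) (fun t : ℝ => 3 * t - 2) :=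
    (contDiff_const.mul contDiff_id).sub contDiff_const
  have hPs : ContDiff ℝ (⊤ : ℕ∞) (fun z : ℝ × E n => P (3 * z.1, z.2)) :=
    h1.comp ((contDiff_const.mul contDiff_fst).prodMk contDiff_snd)
  have hPs' : ContDiff ℝ (⊤ : ℕ∞) (fun z : ℝ × E n => P' (3 * z.1 - 2, z.2)) :=
    h1'.comp (((contDiff_const.mul contDiff_fst).sub contDiff_const).prodMk contDiff_snd)
  have hN := glue_null (G := fun z => P (3 * z.1, z.2)) (P := fun z => P' (3 * z.1 - 2, z.2))
    hl hr (a := 2/3) (b := 1/3) (by norm_num)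
    (fun t q => null_reparam h1 hκ (h3 _ q)) (fun t q => null_reparam h1' hκ' (h3' _ q))
    (fun t ht q => h5 _ (by linarith) q) (fun t ht q => h4' _ (by linarith) q)
  refine ⟨_, ?_, fun t => ?_, hN, fun t ht q => ?_, fun t ht q => ?_, fun t q hq => ?_⟩
  · exact hPs'.comp (contDiff_fst.prodMk (hψi.comp hPs))
  · exact (h2' (3 * t - 2)).comp' (IsDiffeo.comp' ⟨hψi, ψ, NConn.right ⟨P, h1, h2, h3, h4, h5, h6⟩ |>.1, hr, hl⟩ (h2 (3 * t)))
  · change P' (3 * t - 2, ψi (P (3 * t, q))) = φ q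
    rw [h4' _ (by linarith), h4 _ (by linarith), hr]
  · change P' (3 * t - 2, ψi (P (3 * t, q))) = ξ q
    rw [h5 _ (by linarith), h5' _ (by linarith), hl]
  · change P' (3 * t - 2, ψi (P (3 * t, q))) = φ q
    rw [h6 _ q hq]
    have : ψ q = φ q := by rw [← h5 1 le_rfl q, h6 _ q hq]
    rw [← this, hl, h6' _ q hq]

theorem NConn.comp_right {n : ℕ} {U : Set (E n)} {φ ψ h : E n → E n} (H : NConn n U φ ψ)
    (hh : IsDiffeo n h) : NConn n (h ⁻¹' U) (fun q => φ (h q)) (fun q => ψ (h q)) := by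
  obtain ⟨P, h1, h2, h3, h4, h5, h6⟩ := H
  refine ⟨fun z => P (z.1, h z.2), ?_, fun t => ?_, fun t q => ?_, fun t ht q => h4 _ ht _,
    fun t ht q => h5 _ ht _, fun t q hq => h6 _ _ hq⟩
  · exact h1.comp (contDiff_fst.prodMk (hh.1.comp contDiff_snd))
  · exact (h2 t).comp' hh
  · exact h3 t (h q)

theorem nconn_of_path {n : ℕ} {U : Set (E n)} {P : ℝ × E n → E n} (h1 : ContDiff ℝ (⊤ : ℕ∞) P)
    (h2 : ∀ t ∈ Icc (0:ℝ) 1, IsDiffeo n (fun p => P (t, p)))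
    (h3 : ∀ t ∈ Icc (0:ℝ) 1, ∀ q, α₀ n (P (t, q)) (pathDeriv n P t q) = 0)
    (h6 : ∀ t ∈ Icc (0:ℝ) 1, ∀ q ∉ U, P (t, q) = P (0, q)) :
    NConn n U (fun q => P (0, q)) (fun q => P (1, q)) := by
  have hm : ∀ t, Real.smoothTransition t ∈ Icc (0:ℝ) 1 := fun t =>
    ⟨Real.smoothTransition.nonneg t, Real.smoothTransition.le_one t⟩
  have hs : ContDiff ℝ (⊤ : ℕ∞) Real.smoothTransition := Real.smoothTransition.contDiff
  refine ⟨fun z => P (Real.smoothTransition z.1, z.2), ?_, fun t => h2 (Real.smoothTransition t) (hm t), fun t q => ?_,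
    fun t ht q => ?_, fun t ht q => ?_, fun t q hq => ?_⟩
  · exact h1.comp ((hs.comp contDiff_fst).prodMk contDiff_snd)
  · exact null_reparam h1 hs (h3 _ (hm t) q)
  · simp only [Real.smoothTransition.zero_of_nonpos ht]
  · simp only [Real.smoothTransition.one_of_one_le ht]
  · exact h6 _ (hm t) q hq

theorem line_small {n : ℕ} {K : Set (E n)} (hK : IsCompact K) {s : ℝ} {W : ℝ × E n → E n}
    (hW : ContDiff ℝ (⊤ : ℕ∞) W) (hs : ∀ q, W (s, q) = 0) (hsupp : ∀ t, ∀ q ∉ K, W (t, q) = 0)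
    {A B : E n × E n → E n} (hA : ContDiff ℝ (⊤ : ℕ∞) A) (hB : ContDiff ℝ (⊤ : ℕ∞) B)
    (hA0 : ∀ q, A (q, 0) = 0) (hB0 : ∀ q, B (q, 0) = 0) :
    ∀ᶠ t in 𝓝 s, ∀ τ ∈ Icc (0:ℝ) 1,
      IsDiffeo n (fun q => q + (A (q, W (t, q)) + τ • B (q, W (t, q)))) := by
  have hp : ContDiff ℝ (⊤ : ℕ∞) (fun z : ℝ × (ℝ × E n) => (z.2.2, W (z.1, z.2.2))) := by
    have h2 : ContDiff ℝ (⊤ : ℕ∞) (fun z : ℝ × (ℝ × E n) => z.2.2) :=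
      contDiff_snd.comp contDiff_snd
    exact h2.prodMk (hW.comp (contDiff_fst.prodMk h2))
  refine tube_small hK (s := s)
    (Ψ := fun z => A (z.2.2, W (z.1, z.2.2)) + z.2.1 • B (z.2.2, W (z.1, z.2.2))) ?_ ?_ ?_
  · exact (hA.comp hp).add ((contDiff_fst.comp contDiff_snd).smul (hB.comp hp))
  · intro τ q
    simp [hs, hA0, hB0]
  · intro t τ q hq
    simp [hsupp t q hq, hA0, hB0]

theorem line_deriv {n : ℕ} (A B : E n → E n) (t : ℝ) (q : E n) :
    pathDeriv n (fun z => A z.2 + z.1 • B z.2) t q = B q := by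
  have : HasDerivAt (fun s : ℝ => A q + s • B q) ((1 : ℝ) • B q) t :=
    ((hasDerivAt_id t).smul_const (B q)).const_add (A q)
  rw [one_smul] at this
  exact this.deriv

theorem nconn_line {n : ℕ} {U : Set (E n)} {A B : E n → E n} (hA : ContDiff ℝ (⊤ : ℕ∞) A)
    (hB : ContDiff ℝ (⊤ : ℕ∞) B) (hd : ∀ τ ∈ Icc (0:ℝ) 1, IsDiffeo n (fun q => A q + τ • B q))
    (hnull : ∀ (τ : ℝ) q, α₀ n (A q + τ • B q) (B q) = 0) (hU : ∀ q ∉ U, B q = 0) :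
    NConn n U A (fun q => A q + B q) := by
  have := nconn_of_path (U := U) (P := fun z => A z.2 + z.1 • B z.2) ?_ hd ?_ ?_
  · simpa using this
  · exact (hA.comp contDiff_snd).add (contDiff_fst.smul (hB.comp contDiff_snd))
  · intro t _ q
    rw [line_deriv]; exact hnull t q
  · intro t _ q hq
    simp [hU q hq]

def SS (n : ℕ) (q v : E n) : ℝ := ∑ i, (q.1 i + v.1 i) * v.2.1 i

def GG (n : ℕ) (q v : E n) : ℝ := v.2.2 + SS n q v

def ex (n : ℕ) (i : Fin n) : E n := (Pi.single i 1, 0, 0)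

def B1 (n : ℕ) (z : E n × E n) : E n := (z.2.1, 0, 0)

def B2 (n : ℕ) (z : E n × E n) : E n := (0, z.2.2.1, - SS n z.1 z.2)

def B3 (n : ℕ) (i : Fin n) (c : ℝ) (z : E n × E n) : E n :=
  (GG n z.1 z.2 * c) • (0, Pi.single i 1, -(z.1.1 i + z.2.1 i))

def B4 (n : ℕ) (i : Fin n) (c T : ℝ) (z : E n × E n) : E n :=
  -((GG n z.1 z.2 * c) • (0, Pi.single i 1, -(z.1.1 i + z.2.1 i + T)))

theorem SS_zero (n : ℕ) (q : E n) : SS n q 0 = 0 := by simp [SS]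

theorem GG_zero (n : ℕ) (q : E n) : GG n q 0 = 0 := by simp [GG, SS_zero]

theorem SS_cd (n : ℕ) : ContDiff ℝ (⊤ : ℕ∞) (fun z : E n × E n => SS n z.1 z.2) := by
  unfold SS; fun_prop

theorem GG_cd (n : ℕ) : ContDiff ℝ (⊤ : ℕ∞) (fun z : E n × E n => GG n z.1 z.2) := by
  unfold GG
  have := SS_cd n
  fun_prop

theorem B1_cd (n : ℕ) : ContDiff ℝ (⊤ : ℕ∞) (B1 n) := by
  unfold B1; fun_prop

theorem B2_cd (n : ℕ) : ContDiff ℝ (⊤ : ℕ∞) (B2 n) := by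
  unfold B2
  have := SS_cd n
  fun_prop

theorem B3_cd (n : ℕ) (i : Fin n) (c : ℝ) : ContDiff ℝ (⊤ : ℕ∞) (B3 n i c) := by
  unfold B3
  have := GG_cd n
  fun_prop

theorem B4_cd (n : ℕ) (i : Fin n) (c T : ℝ) : ContDiff ℝ (⊤ : ℕ∞) (B4 n i c T) := by
  unfold B4
  have := GG_cd n
  fun_prop

theorem B_sum (n : ℕ) (i : Fin n) (c T : ℝ) (hcT : c * T = 1) (q v : E n) :
    B1 n (q, v) + B2 n (q, v) + B3 n i c (q, v) + B4 n i c T (q, v) = v := by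
  ext
  · simp [B1, B2, B3, B4]
  · simp [B1, B2, B3, B4]
  · simp only [B1, B2, B3, B4, GG, Prod.snd_add, Prod.smul_snd, Prod.snd_neg, smul_eq_mul]
    linear_combination (v.2.2 + SS n q v) * hcT

theorem null1 (n : ℕ) (p : E n) (z : E n × E n) : α₀ n p (B1 n z) = 0 := by
  simp [α₀, B1]

theorem null2 (n : ℕ) (p : E n) (z : E n × E n) (hp : p.1 = z.1.1 + z.2.1) :
    α₀ n p (B2 n z) = 0 := by
  simp [α₀, B2, SS, hp]

theorem null3 (n : ℕ) (i : Fin n) (c : ℝ) (p : E n) (z : E n × E n) (hp : p.1 = z.1.1 + z.2.1) :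
    α₀ n p (B3 n i c z) = 0 := by
  rw [B3, alpha_smul]
  simp [α₀, hp, Pi.single_apply]

theorem null4 (n : ℕ) (i : Fin n) (c T : ℝ) (p : E n) (z : E n × E n)
    (hp : p.1 i = z.1.1 i + z.2.1 i + T) :
    α₀ n p (B4 n i c T z) = 0 := by
  rw [B4, ← neg_smul, alpha_smul]
  simp [α₀, hp, Pi.single_apply]
  right; ring

theorem shift_conn {n : ℕ} (i : Fin n) {U : Set (E n)} {χ : E n → ℝ} (hχ : ContDiff ℝ (⊤ : ℕ∞) χ)
    {T : ℝ} (hT : ∀ τ ∈ Icc (0:ℝ) 1, IsDiffeo n (fun p => p + τ • (T * χ p) • ex n i))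
    (hχU : ∀ q ∉ U, χ q = 0) {m : E n → E n} (hm : IsDiffeo n m) (hmU : ∀ q ∉ U, m q = q) :
    NConn n U m (fun q => m q + (T * χ (m q)) • ex n i) := by
  refine nconn_line (B := fun q => (T * χ (m q)) • ex n i) hm.1 ?_ ?_ ?_ ?_
  · exact (contDiff_const.mul (hχ.comp hm.1)).smul contDiff_const
  · intro τ hτ
    exact (hT τ hτ).comp' hm
  · intro τ q
    rw [alpha_smul]
    simp [α₀, ex]
  · intro q hq
    simp [hmU q hq, hχU q hq]

theorem small_conn {n : ℕ} (i : Fin n) {K U : Set (E n)} (hK : IsCompact K) (hU : IsOpen U)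
    (hKU : K ⊆ U) {s : ℝ} {W : ℝ × E n → E n}
    (hW : ContDiff ℝ (⊤ : ℕ∞) W) (hs : ∀ q, W (s, q) = 0) (hsupp : ∀ t, ∀ q ∉ K, W (t, q) = 0) :
    ∀ᶠ t in 𝓝 s, NConn n U (fun q => q) (fun q => q + W (t, q)) := by
  obtain ⟨χ, L, hχ, hL, hLU, hχ1, hχ0⟩ := exists_bump hK hU hKU
  have hχU : ∀ q ∉ U, χ q = 0 := fun q hq => hχ0 q fun h => hq (hLU h)
  obtain ⟨T, hTpos, hT⟩ : ∃ T : ℝ, 0 < T ∧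
      ∀ τ ∈ Icc (0:ℝ) 1, IsDiffeo n (fun p => p + τ • (T * χ p) • ex n i) := by
    have := tube_small hL (s := 0) (Ψ := fun z => z.2.1 • (z.1 * χ z.2.2) • ex n i) (by fun_prop)
      (by intro τ q; simp) (by intro t τ q hq; simp [hχ0 q hq])
    obtain ⟨T, h1, h2⟩ := ((this.filter_mono nhdsWithin_le_nhds).and
      (self_mem_nhdsWithin : Ioi (0:ℝ) ∈ 𝓝[>] 0)).exists
    exact ⟨T, h2, h1⟩
  obtain ⟨c, hcT⟩ : ∃ c, c * T = 1 := ⟨T⁻¹, inv_mul_cancel₀ hTpos.ne'⟩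
  have c1 := B1_cd n
  have c2 := B2_cd n
  have c3 := B3_cd n i c
  have c4 := B4_cd n i c T
  have z1 : ∀ q, B1 n (q, 0) = 0 := fun q => by simp [B1]
  have z2 : ∀ q, B2 n (q, 0) = 0 := fun q => by simp [B2, SS_zero]
  have z3 : ∀ q, B3 n i c (q, 0) = 0 := fun q => by simp [B3, GG_zero]
  have z4 : ∀ q, B4 n i c T (q, 0) = 0 := fun q => by simp [B4, GG_zero]
  filter_upwards [line_small hK hW hs hsupp (A := fun _ => 0) contDiff_const c1 (fun _ => rfl) z1,
    line_small hK hW hs hsupp c1 c2 z1 z2,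
    line_small hK hW hs hsupp (c1.add c2) c3 (by intro q; simp [z1, z2]) z3,
    line_small hK hW hs hsupp ((c1.add c2).add c3) c4 (by intro q; simp [z1, z2, z3]) z4]
    with t l1 l2 l3 l4
  have hv : ContDiff ℝ (⊤ : ℕ∞) (fun q => (q, W (t, q))) :=
    contDiff_id.prodMk (hW.comp (contDiff_const.prodMk contDiff_id))
  have hvU : ∀ q ∉ U, W (t, q) = 0 := fun q hq => hsupp t q fun h => hq (hKU h)
  have b1 := c1.comp hv
  have b2 := c2.comp hv
  have b3 := c3.comp hv
  have b4 := c4.comp hv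
  have C1 : NConn n U (fun q => q) (fun q => q + B1 n (q, W (t, q))) := by
    refine nconn_line (A := fun q => q) (B := fun q => B1 n (q, W (t, q))) contDiff_id b1 ?_ ?_ ?_
    · intro τ hτ; simpa using l1 τ hτ
    · intro τ q; exact null1 _ _ _
    · intro q hq; simp [hvU q hq, z1]
  have C2 : NConn n U (fun q => q + B1 n (q, W (t, q)))
      (fun q => q + B1 n (q, W (t, q)) + B2 n (q, W (t, q))) := by
    refine nconn_line (A := fun q => q + B1 n (q, W (t, q))) (B := fun q => B2 n (q, W (t, q)))
      (contDiff_id.add b1) b2 ?_ ?_ ?_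
    · intro τ hτ; simpa [add_assoc] using l2 τ hτ
    · intro τ q; exact null2 _ _ _ (by simp [B1, B2])
    · intro q hq; simp [hvU q hq, z2]
  have C3 : NConn n U (fun q => q + B1 n (q, W (t, q)) + B2 n (q, W (t, q)))
      (fun q => q + B1 n (q, W (t, q)) + B2 n (q, W (t, q)) + B3 n i c (q, W (t, q))) := by
    refine nconn_line (A := fun q => q + B1 n (q, W (t, q)) + B2 n (q, W (t, q)))
      (B := fun q => B3 n i c (q, W (t, q)))
      ((contDiff_id.add b1).add b2) b3 ?_ ?_ ?_
    · intro τ hτ; simpa [add_assoc] using l3 τ hτ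
    · intro τ q; exact null3 _ _ _ _ _ (by simp [B1, B2, B3])
    · intro q hq; simp [hvU q hq, z3]
  set m : E n → E n :=
    fun q => q + B1 n (q, W (t, q)) + B2 n (q, W (t, q)) + B3 n i c (q, W (t, q)) with hm
  have hmd : IsDiffeo n m := C3.right
  have hmU : ∀ q ∉ U, m q = q := fun q hq => by simp [hm, hvU q hq, z1, z2, z3]
  have hsm : ∀ q, q + W (t, q) = m q + B4 n i c T (q, W (t, q)) := by
    intro q
    conv_lhs => rw [← B_sum n i c T hcT q (W (t, q))]
    simp only [hm, add_assoc]
  have l4' : ∀ τ ∈ Icc (0:ℝ) 1, IsDiffeo n (fun q => m q + τ • B4 n i c T (q, W (t, q))) := by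
    intro τ hτ
    have := l4 τ hτ
    simpa only [hm, add_assoc] using this
  have hsd : IsDiffeo n (fun q => q + W (t, q)) := by
    have := l4' 1 (by simp)
    simpa only [hsm, one_smul] using this
  have C4 := shift_conn i hχ hT hχU hmd hmU
  have C6 := shift_conn i hχ hT hχU hsd (fun q hq => by simp [hvU q hq])
  have C5 : NConn n U (fun q => m q + (T * χ (m q)) • ex n i)
      (fun q => (q + W (t, q)) + (T * χ (q + W (t, q))) • ex n i) := by
    have hmc : ContDiff ℝ (⊤ : ℕ∞)
        (fun z : ℝ × E n => m z.2 + z.1 • B4 n i c T (z.2, W (t, z.2))) :=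
      (hmd.1.comp contDiff_snd).add (contDiff_fst.smul (b4.comp contDiff_snd))
    have := nconn_of_path (U := U) (P := fun z => (m z.2 + z.1 • B4 n i c T (z.2, W (t, z.2))) +
      (T * χ (m z.2 + z.1 • B4 n i c T (z.2, W (t, z.2)))) • ex n i) ?_ ?_ ?_ ?_
    · simpa [hsm] using this
    · exact hmc.add ((contDiff_const.mul (hχ.comp hmc)).smul contDiff_const)
    · intro τ hτ
      have := (hT 1 (by simp)).comp' (l4' τ hτ)
      simpa only [one_smul] using this
    · intro τ hτ q
      by_cases hq : q ∈ K
      · have hin : m q + τ • B4 n i c T (q, W (t, q)) ∈ K := by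
          by_contra hp
          obtain ⟨-, g, -, hg, -⟩ := l4' τ hτ
          have e := hg.injective.eq_iff (a := q) (b := m q + τ • B4 n i c T (q, W (t, q)))
          have h1 : ∀ p ∉ K, m p + τ • B4 n i c T (p, W (t, p)) = p := by
            intro p hp
            simp [hm, hsupp t p hp, z1, z2, z3, z4]
          have h2 := e.1 (h1 _ hp).symm
          rw [← h2] at hp
          exact hp hq
        refine null_congr (q' := q)
          (Q := fun z => (m z.2 + T • ex n i) + z.1 • B4 n i c T (z.2, W (t, z.2))) ?_ ?_
        · have hct : ContinuousAt (fun s : ℝ => m q + s • B4 n i c T (q, W (t, q))) τ := by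
            fun_prop
          filter_upwards [hct.eventually (hχ1 _ hin)] with s hs'
          simp only [hs', mul_one]
          abel
        · rw [line_deriv (fun p => m p + T • ex n i) (fun p => B4 n i c T (p, W (t, p)))]
          apply null4
          simp [hm, B1, B2, B3, B4, ex]
      · have h0 : B4 n i c T (q, W (t, q)) = 0 := by rw [hsupp t q hq, z4]
        refine null_congr (q' := q)
          (Q := fun z => (m z.2 + (T * χ (m z.2)) • ex n i) + z.1 • (0 : E n)) ?_ ?_
        · exact Eventually.of_forall fun s => by simp [h0]
        · rw [line_deriv (fun p => m p + (T * χ (m p)) • ex n i) (fun p => 0), alpha_zero]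
    · intro τ _ q hq
      have h0 : B4 n i c T (q, W (t, q)) = 0 := by rw [hvU q hq, z4]
      simp [h0]
  exact ((((C1.trans C2).trans C3).trans C4).trans C5).trans C6.symm

/-- isotopies that move only a compact set may be replaced by null ones. -/
theorem isotopy_conn {n : ℕ} (i : Fin n) {K U : Set (E n)} (hK : IsCompact K) (hU : IsOpen U)
    (hKU : K ⊆ U) {Y : ℝ × E n → E n} (hY : ContDiff ℝ (⊤ : ℕ∞) Y)
    (hd : ∀ t, IsDiffeo n (fun q => Y (t, q)))
    (hst : ∀ s t, ∀ q ∉ K, Y (s, q) = Y (t, q)) (s t : ℝ) :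
    NConn n U (fun q => Y (s, q)) (fun q => Y (t, q)) := by
  refine isPreconnected_univ.induction₂ (P := fun s t : ℝ =>
    NConn n U (fun q => Y (s, q)) (fun q => Y (t, q))) ?_ ?_ ?_ (mem_univ s) (mem_univ t)
  · intro s _
    rw [nhdsWithin_univ]
    obtain ⟨hsm, g, hg, hl, hr⟩ := hd s
    have hgp : ∀ p, Y (s, g p) = p := hr
    have hgp' : ∀ p, g (Y (s, p)) = p := hl
    have hK' : IsCompact (g ⁻¹' K) := by
      have : g ⁻¹' K = (fun q => Y (s, q)) '' K := by
        rw [Set.image_eq_preimage_of_inverse hl hr]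
      rw [this]; exact hK.image hsm.continuous
    have := small_conn i hK' (hU.preimage hg.continuous) (preimage_mono hKU) (s := s)
      (W := fun z => Y (z.1, g z.2) - z.2) ?_ ?_ ?_
    · filter_upwards [this] with t ht
      have := ht.comp_right (hd s)
      have e : (fun q => Y (s, q)) ⁻¹' (g ⁻¹' U) = U := by
        ext q; simp [hgp']
      rw [e] at this
      simpa [hgp'] using this
    · exact (hY.comp (contDiff_fst.prodMk (hg.comp contDiff_snd))).sub contDiff_snd
    · intro q; simp [hgp]
    · intro t q hq
      change Y (t, g q) - q = 0
      rw [hst t s (g q) hq, hgp, sub_self]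
  · intro x y z _ _ _ h h'; exact h.trans h'
  · intro x y _ _ h; exact h.symm

/-- being the identity far away -/
def CSupp (n : ℕ) (h : E n → E n) : Prop := ∃ S : ℝ, ∀ q, S < ‖q‖ → h q = q

theorem CSupp.comp {n : ℕ} {f g : E n → E n} (hf : CSupp n f) (hg : CSupp n g) :
    CSupp n (fun q => f (g q)) := by
  obtain ⟨S, hS⟩ := hf
  obtain ⟨T, hT⟩ := hg
  refine ⟨max S T, fun q hq => ?_⟩
  change f (g q) = q
  rw [hT q (lt_of_le_of_lt (le_max_right _ _) hq), hS q (lt_of_le_of_lt (le_max_left _ _) hq)]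

theorem CSupp.inv {n : ℕ} {f g : E n → E n} (hf : CSupp n f) (hl : LeftInverse g f) :
    CSupp n g := by
  obtain ⟨S, hS⟩ := hf
  refine ⟨S, fun q hq => ?_⟩
  have := hl q
  rwa [hS q hq] at this

theorem compact_approx {n : ℕ} {Y : ℝ × E n → E n} (hY : ContDiff ℝ (⊤ : ℕ∞) Y)
    (hd : ∀ t, IsDiffeo n (fun q => Y (t, q))) (R : ℝ) (s t : ℝ) :
    ∃ h, IsDiffeo n h ∧ CSupp n h ∧ ∀ q ∈ closedBall (0 : E n) R, h (Y (s, q)) = Y (t, q) := by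
  refine isPreconnected_univ.induction₂ (P := fun s t : ℝ =>
    ∃ h, IsDiffeo n h ∧ CSupp n h ∧ ∀ q ∈ closedBall (0 : E n) R, h (Y (s, q)) = Y (t, q))
    ?_ ?_ ?_ (mem_univ s) (mem_univ t)
  · intro s _
    rw [nhdsWithin_univ]
    obtain ⟨hsm, g, hg, hl, hr⟩ := hd s
    have hgp : ∀ p, Y (s, g p) = p := hr
    have hgp' : ∀ p, g (Y (s, p)) = p := hl
    have hK' : IsCompact ((fun q => Y (s, q)) '' closedBall (0 : E n) R) :=
      (isCompact_closedBall _ _).image hsm.continuous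
    obtain ⟨χ, L, hχ, hL, -, h1, h0⟩ := exists_bump hK' isOpen_univ (subset_univ _)
    have := tube_small hL (s := s)
      (Ψ := fun z => χ z.2.2 • (Y (z.1, g z.2.2) - z.2.2)) ?_ ?_ ?_
    · filter_upwards [this] with t ht
      refine ⟨_, ht 0 (by simp), ?_, ?_⟩
      · obtain ⟨S, hS⟩ := hL.isBounded.exists_norm_le
        refine ⟨S, fun q hq => ?_⟩
        have : q ∉ L := fun h => absurd (hS q h) (not_le.2 hq)
        simp [h0 q this]
      · intro q hq
        have : χ (Y (s, q)) = 1 := (h1 _ (mem_image_of_mem _ hq)).self_of_nhds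
        simp [this, hgp']
    · have := hY.comp (contDiff_fst.prodMk (hg.comp (contDiff_snd.comp contDiff_snd)) :
        ContDiff ℝ (⊤ : ℕ∞) (fun z : ℝ × ℝ × E n => (z.1, g z.2.2)))
      exact (hχ.comp (contDiff_snd.comp contDiff_snd)).smul
        (this.sub (contDiff_snd.comp contDiff_snd))
    · intro τ q; simp [hgp]
    · intro t τ q hq; simp [h0 q hq]
  · rintro x y z _ _ _ ⟨h, h1, h2, h3⟩ ⟨k, k1, k2, k3⟩
    refine ⟨_, k1.comp' h1, k2.comp h2, fun q hq => ?_⟩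
    change k (h _) = _
    rw [h3 q hq, k3 q hq]
  · rintro x y _ _ ⟨h, h1, h2, h3⟩
    obtain ⟨hs, g, hg, hl, hr⟩ := h1
    refine ⟨g, ⟨hg, h, hs, hr, hl⟩, h2.inv hl, fun q hq => ?_⟩
    rw [← h3 q hq, hl]

theorem isDiffeo_scale {n : ℕ} (c : E n) {a b : ℝ} (hab : a * b = 1) :
    IsDiffeo n (fun q => c + a • (q - c)) := by
  refine ⟨by fun_prop, fun q => c + b • (q - c), by fun_prop, fun q => ?_, fun q => ?_⟩
  · simp [smul_smul, mul_comm b a, hab]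
  · simp [smul_smul, hab]

/-- Alexander trick step. -/
theorem step_conn {n : ℕ} (i : Fin n) {H h : E n → E n} (hH : IsDiffeo n H) (hh : IsDiffeo n h)
    (cH : CSupp n H) (ch : CSupp n h) (c : E n) {r r' R : ℝ} (hr : 0 < r) (hr' : r' < r)
    (hR : 0 ≤ R) (hHh : ∀ q ∈ ball c r, h q = H q) :
    ∃ H', IsDiffeo n H' ∧ CSupp n H' ∧ (∀ q ∈ ball c R, H' q = h q) ∧
      NConn n (closedBall c r')ᶜ H H' := by
  obtain ⟨sH, Hi, sHi, lH, rH⟩ := hH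
  obtain ⟨sh, hi, shi, lh, rh⟩ := hh
  have hH : IsDiffeo n H := ⟨sH, Hi, sHi, lH, rH⟩
  set u : E n → E n := fun q => Hi (h q) with hu
  set v : E n → E n := fun q => hi (H q) with hv
  have su : ContDiff ℝ (⊤ : ℕ∞) u := sHi.comp sh
  have sv : ContDiff ℝ (⊤ : ℕ∞) v := shi.comp sH
  have uv : ∀ q, u (v q) = q := fun q => by simp only [hu, hv]; rw [rh, lH]
  have vu : ∀ q, v (u q) = q := fun q => by simp only [hu, hv]; rw [rH, lh]
  have du : IsDiffeo n u := ⟨su, v, sv, vu, uv⟩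
  have dv : IsDiffeo n v := ⟨sv, u, su, uv, vu⟩
  have uin : ∀ q ∈ ball c r, u q = q := fun q hq => by simp only [hu]; rw [hHh q hq, lH]
  have vin : ∀ q ∈ ball c r, v q = q := fun q hq => by
    have := vu q; rwa [uin q hq] at this
  have cu : CSupp n u := (cH.inv lH).comp ch
  obtain ⟨S₀, hS₀⟩ := cu
  set S : ℝ := max 0 (S₀ + ‖c‖) with hSdef
  have hS0 : 0 ≤ S := le_max_left _ _
  have uout : ∀ q, S < ‖q - c‖ → u q = q := by
    intro q hq
    apply hS₀
    have h1 : S₀ + ‖c‖ ≤ S := le_max_right _ _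
    have h2 := norm_sub_le q c
    linarith
  have vout : ∀ q, S < ‖q - c‖ → v q = q := fun q hq => by
    have := vu q; rwa [uout q hq] at this
  set ε : ℝ := r / (R + r) with hε
  have hε0 : 0 < ε := by positivity
  have hε1 : ε ≤ 1 := by rw [hε, div_le_one (by positivity)]; linarith
  set l : ℝ → ℝ := fun t => 1 - (1 - ε) * Real.smoothTransition t with hl
  have sl : ContDiff ℝ (⊤ : ℕ∞) l :=
    contDiff_const.sub (contDiff_const.mul Real.smoothTransition.contDiff)
  have l1 : ∀ t, l t ≤ 1 := fun t => by
    have := Real.smoothTransition.nonneg t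
    simp only [hl]; nlinarith
  have lε : ∀ t, ε ≤ l t := fun t => by
    have := Real.smoothTransition.le_one t
    simp only [hl]; nlinarith
  have l0 : ∀ t, 0 < l t := fun t => hε0.trans_le (lε t)
  set Y : ℝ × E n → E n := fun z =>
    H (u (c + (l z.1)⁻¹ • (v (c + l z.1 • (z.2 - c)) - c))) with hY
  have sY : ContDiff ℝ (⊤ : ℕ∞) Y := by
    have s1 : ContDiff ℝ (⊤ : ℕ∞) (fun z : ℝ × E n => l z.1) := sl.comp contDiff_fst
    have s2 : ContDiff ℝ (⊤ : ℕ∞) (fun z : ℝ × E n => (l z.1)⁻¹) :=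
      s1.inv fun z => (l0 z.1).ne'
    refine sH.comp (su.comp (contDiff_const.add (s2.smul (ContDiff.sub (sv.comp
      (contDiff_const.add (s1.smul (contDiff_snd.sub contDiff_const)))) contDiff_const))))
  have dY : ∀ t, IsDiffeo n (fun q => Y (t, q)) := by
    intro t
    have d1 := isDiffeo_scale c (mul_inv_cancel₀ (l0 t).ne')
    have d2 := isDiffeo_scale c (inv_mul_cancel₀ (l0 t).ne')
    exact hH.comp' (du.comp' (d2.comp' (dv.comp' d1)))
  have back : ∀ t q, c + (l t)⁻¹ • (c + l t • (q - c) - c) = q := by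
    intro t q
    rw [add_sub_cancel_left, smul_smul, inv_mul_cancel₀ (l0 t).ne', one_smul]
    abel
  have Yout : ∀ t, ∀ q ∉ closedBall c (S / ε) \ ball c r, Y (t, q) = H q := by
    intro t q hq
    have hn : ‖c + l t • (q - c) - c‖ = l t * ‖q - c‖ := by
      rw [add_sub_cancel_left, norm_smul, Real.norm_of_nonneg (l0 t).le]
    simp only [hY]
    by_cases hb : q ∈ ball c r
    · have : c + l t • (q - c) ∈ ball c r := by
        rw [mem_ball_iff_norm, hn]
        rw [mem_ball_iff_norm] at hb
        nlinarith [l1 t, l0 t, norm_nonneg (q - c)]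
      rw [vin _ this, back, uin q hb]
    · have h1 : S / ε < ‖q - c‖ := by
        by_contra hcon
        exact hq ⟨by rw [mem_closedBall_iff_norm]; linarith, hb⟩
      rw [div_lt_iff₀ hε0] at h1
      have h2 : S < ‖c + l t • (q - c) - c‖ := by
        rw [hn]; nlinarith [lε t, norm_nonneg (q - c)]
      have h3 : S < ‖q - c‖ := by nlinarith [norm_nonneg (q - c)]
      rw [vout _ h2, back, uout q h3]
  have hl0 : l 0 = 1 := by simp [hl]
  have hl1 : l 1 = ε := by simp [hl]
  have Y0 : (fun q => Y (0, q)) = H := by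
    funext q
    simp only [hY, hl0, inv_one, one_smul]
    rw [add_sub_cancel, add_sub_cancel, uv]
  have conn := isotopy_conn i ((isCompact_closedBall c (S / ε)).diff isOpen_ball)
    (isClosed_closedBall (x := c) (ε := r')).isOpen_compl
    (fun q hq hq' => hq.2 (closedBall_subset_ball hr' hq')) sY dY
    (fun s t q hq => by rw [Yout s q hq, Yout t q hq]) 0 1
  rw [Y0] at conn
  refine ⟨_, dY 1, ?_, ?_, conn⟩
  · obtain ⟨T, hT⟩ := cH
    refine ⟨max T (S / ε + ‖c‖), fun q hq => ?_⟩
    have h1 := lt_of_le_of_lt (le_max_left _ _) hq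
    have h2 := lt_of_le_of_lt (le_max_right _ _) hq
    change Y (1, q) = q
    rw [Yout, hT q h1]
    rintro ⟨h3, -⟩
    rw [mem_closedBall_iff_norm] at h3
    have := norm_sub_norm_le q c
    linarith
  · intro q hq
    have hb : c + l 1 • (q - c) ∈ ball c r := by
      rw [mem_ball_iff_norm, add_sub_cancel_left, norm_smul, Real.norm_of_nonneg (l0 1).le, hl1, hε]
      rw [mem_ball_iff_norm] at hq
      rw [div_mul_eq_mul_div, div_lt_iff₀ (by positivity)]
      nlinarith
    simp only [hY]
    rw [vin _ hb, back]
    exact rH (h q)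

theorem seq_step {n : ℕ} (i : Fin n) {f : E n → E n}
    (hap : ∀ R : ℝ, ∃ h, IsDiffeo n h ∧ CSupp n h ∧ ∀ q ∈ closedBall (0 : E n) R, h q = f q)
    (k : ℕ) (H : E n → E n) (hH : IsDiffeo n H) (cH : CSupp n H)
    (hHf : ∀ q ∈ ball (0 : E n) k, H q = f q) :
    ∃ H', (IsDiffeo n H' ∧ CSupp n H' ∧ ∀ q ∈ ball (0 : E n) ((k + 1 : ℕ) : ℝ), H' q = f q) ∧
      ∃ V, NConn n V H H' ∧ ∀ q ∈ ball (0 : E n) ((k : ℝ) - 1), q ∉ V := by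
  obtain ⟨h, dh, ch, hf⟩ := hap (k + 1)
  rcases Nat.eq_zero_or_pos k with rfl | hk
  · obtain ⟨S, hS⟩ := cH
    obtain ⟨T, hT⟩ := ch
    set A : ℝ := |S| + |T| + 2 with hA
    have hA0 : 0 ≤ A := by positivity
    set c : E n := (0, 0, A) with hc
    have hcn : ‖c‖ = A := by
      rw [hc, Prod.norm_mk, Prod.norm_mk, norm_zero, Real.norm_of_nonneg hA0,
        max_eq_right hA0, max_eq_right hA0]
    have hfar : ∀ q ∈ ball c 1, h q = H q := by
      intro q hq
      rw [mem_ball_iff_norm'] at hq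
      have h1 := norm_sub_norm_le c q
      rw [hcn] at h1
      have hs := le_abs_self S
      have ht := le_abs_self T
      have hs' := abs_nonneg S
      have ht' := abs_nonneg T
      rw [hS q (by linarith), hT q (by linarith)]
    obtain ⟨H', d', c', e', N⟩ := step_conn i hH dh ⟨S, hS⟩ ⟨T, hT⟩ c (r := 1) (r' := 1 / 2)
      (R := A + 1) one_pos (by norm_num) (by positivity) hfar
    refine ⟨H', ⟨d', c', fun q hq => ?_⟩, _, N, fun q hq => ?_⟩
    · have hq1 : ‖q‖ < 1 := by simpa using hq
      rw [e' q, hf q]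
      · simpa using hq1.le
      · rw [mem_ball_iff_norm]
        have := norm_sub_le q c
        rw [hcn] at this
        linarith
    · rw [mem_ball_zero_iff] at hq
      have := norm_nonneg q
      norm_num at hq
      linarith
  · have hk' : (1 : ℝ) ≤ k := by exact_mod_cast hk
    obtain ⟨H', d', c', e', N⟩ := step_conn i hH dh cH ch 0 (r := k) (r' := k - 1 / 2)
      (R := k + 1) (by linarith) (by linarith) (by linarith) (by
        intro q hq
        rw [hHf q hq, hf q]
        rw [mem_ball_zero_iff] at hq
        rw [mem_closedBall_zero_iff]; linarith)
    refine ⟨H', ⟨d', c', fun q hq => ?_⟩, _, N, fun q hq hq' => ?_⟩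
    · push_cast at hq
      rw [e' q hq, hf q (ball_subset_closedBall hq)]
    · apply hq'
      rw [mem_ball_zero_iff] at hq
      rw [mem_closedBall_zero_iff]; linarith

theorem exists_seq {n : ℕ} (i : Fin n) {f : E n → E n}
    (hap : ∀ R : ℝ, ∃ h, IsDiffeo n h ∧ CSupp n h ∧ ∀ q ∈ closedBall (0 : E n) R, h q = f q) :
    ∃ H : ℕ → E n → E n, (∀ q, H 0 q = q) ∧ (∀ k, IsDiffeo n (H k)) ∧
      (∀ k : ℕ, ∀ q ∈ ball (0 : E n) k, H k q = f q) ∧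
      ∀ k : ℕ, ∃ V, NConn n V (H k) (H (k + 1)) ∧ ∀ q ∈ ball (0 : E n) ((k : ℝ) - 1), q ∉ V := by
  choose! nxt h1 h2 using seq_step i hap
  let H : ℕ → E n → E n := fun k => Nat.rec (fun q => q) (fun k h => nxt k h) k
  have hs : ∀ k, H (k + 1) = nxt k (H k) := fun k => rfl
  have inv : ∀ k : ℕ, IsDiffeo n (H k) ∧ CSupp n (H k) ∧
      ∀ q ∈ ball (0 : E n) (k : ℝ), H k q = f q := by
    intro k
    induction k with
    | zero =>
      refine ⟨isDiffeo_id n, ⟨0, fun q _ => rfl⟩, fun q hq => ?_⟩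
      simp at hq
    | succ k ih =>
      rw [hs]
      exact h1 k (H k) ih.1 ih.2.1 ih.2.2
  refine ⟨H, fun q => rfl, fun k => (inv k).1, fun k => (inv k).2.2, fun k => ?_⟩
  rw [hs]
  exact h2 k (H k) (inv k).1 (inv k).2.1 (inv k).2.2

/-- infinite concatenation. -/
theorem glue_seq {n : ℕ} {f : E n → E n} (hf : IsDiffeo n f) (H : ℕ → E n → E n)
    (H0 : ∀ q, H 0 q = q) (dH : ∀ k, IsDiffeo n (H k))
    (Hf : ∀ k : ℕ, ∀ q ∈ ball (0 : E n) k, H k q = f q)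
    (hN : ∀ k : ℕ, ∃ V, NConn n V (H k) (H (k + 1)) ∧
      ∀ q ∈ ball (0 : E n) ((k : ℝ) - 1), q ∉ V) :
    ∃ g : ℝ × E n → E n, IsSmoothPath n g ∧ IsNullPath n g ∧
      (∀ p, g (0, p) = p) ∧ (∀ p, g (1, p) = f p) := by
  choose V hP hV using hN
  choose P sP dP nP P0 P1 PV using hP
  have dH' := fun k => (dH k).2
  choose Hi sHi lH rH using dH'
  have dHi : ∀ k, IsDiffeo n (Hi k) := fun k => ⟨sHi k, H k, (dH k).1, rH k, lH k⟩
  let e : ℕ → ℝ := fun k => 1 - 1 / (k + 1)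
  let a : ℕ → ℝ := fun k => 1 - 1 / (k + 3 / 2)
  have ea : ∀ k, e k < a k := fun k => by
    have : (1 : ℝ) / (k + 3 / 2) < 1 / (k + 1) :=
      one_div_lt_one_div_of_lt (by positivity) (by linarith)
    simp only [e, a]; linarith
  have ae : ∀ k, a k < e (k + 1) := fun k => by
    have : (1 : ℝ) / (k + 1 + 1) < 1 / (k + 3 / 2) :=
      one_div_lt_one_div_of_lt (by positivity) (by linarith)
    simp only [e, a]; push_cast; linarith
  have e0 : ∀ k, 0 ≤ e k := fun k => by
    have : (1 : ℝ) / (k + 1) ≤ 1 := by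
      rw [div_le_one (by positivity)]
      have : (0 : ℝ) ≤ k := by positivity
      linarith
    simp only [e]; linarith
  have e1 : ∀ k, e k ≤ 1 := fun k => by
    have : (0 : ℝ) < 1 / (k + 1) := by positivity
    simp only [e]; linarith
  have amono : Monotone a :=
    monotone_nat_of_le_succ fun k => ((ae k).trans (ea (k + 1))).le
  let κ : ℕ → ℝ → ℝ := fun k t => (t - a k) / (e (k + 1) - a k)
  have sκ : ∀ k, ContDiff ℝ (⊤ : ℕ∞) (κ k) := fun k =>
    (contDiff_id.sub contDiff_const).div_const _
  have κ0 : ∀ k t, t ≤ a k → κ k t ≤ 0 := fun k t h =>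
    div_nonpos_of_nonpos_of_nonneg (by linarith) (by linarith [ae k])
  have κ1 : ∀ k t, e (k + 1) ≤ t → 1 ≤ κ k t := fun k t h => by
    simp only [κ]
    rw [one_le_div (by linarith [ae k])]; linarith
  let G : ℕ → ℝ × E n → E n := fun k => Nat.rec (fun z => z.2)
    (fun k G z => P k (κ k z.1, Hi k (G z))) k
  have Gs : ∀ k z, G (k + 1) z = P k (κ k z.1, Hi k (G k z)) := fun k z => rfl
  have G0 : ∀ z, G 0 z = z.2 := fun z => rfl
  have sG : ∀ k, ContDiff ℝ (⊤ : ℕ∞) (G k) := by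
    intro k
    induction k with
    | zero => exact contDiff_snd
    | succ k ih => exact (sP k).comp (((sκ k).comp contDiff_fst).prodMk ((sHi k).comp ih))
  have dG : ∀ k t, IsDiffeo n (fun q => G k (t, q)) := by
    intro k t
    induction k with
    | zero => exact isDiffeo_id n
    | succ k ih => exact (dP k (κ k t)).comp' ((dHi k).comp' ih)
  have Ga : ∀ k t, t ≤ a k → ∀ q, G (k + 1) (t, q) = G k (t, q) := by
    intro k t ht q
    rw [Gs, P0 k _ (κ0 k t ht), rH]
  have Ge : ∀ k t, e k ≤ t → ∀ q, G k (t, q) = H k q := by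
    intro k
    induction k with
    | zero => intro t _ q; rw [G0, H0]
    | succ k ih =>
      intro t ht q
      rw [Gs, P1 k _ (κ1 k t ht), ih t (by linarith [ea k, ae k]), lH]
  have nG : ∀ k, NullAll n (G k) := by
    intro k
    induction k with
    | zero =>
      intro t q
      have : pathDeriv n (G 0) t q = 0 := by simp [pathDeriv, G0]
      rw [this, alpha_zero]
    | succ k ih =>
      refine glue_null (P := fun z => P k (κ k z.1, z.2)) (lH k) (rH k) (ea k) ih ?_ (Ge k) ?_
      · intro t q
        exact null_reparam (sP k) (sκ k) (nP k _ _)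
      · intro t ht q
        exact P0 k _ (κ0 k t ht) q
  have Gstep : ∀ k : ℕ, ∀ q ∈ ball (0 : E n) ((k : ℝ) - 1), ∀ t, G (k + 1) (t, q) = G k (t, q) := by
    intro k q hq t
    rcases le_total t (a k) with h | h
    · exact Ga k t h q
    · rw [Gs, Ge k t ((ea k).le.trans h), lH, PV k _ q (hV k q hq)]
  have Gstab : ∀ k j : ℕ, k ≤ j → ∀ q ∈ ball (0 : E n) ((k : ℝ) - 1), ∀ t,
      G j (t, q) = G k (t, q) := by
    intro k j hkj q hq t
    induction j, hkj using Nat.le_induction with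
    | base => rfl
    | succ j hj ih =>
      rw [Gstep j q _ t, ih]
      refine ball_subset_ball ?_ hq
      have : (k : ℝ) ≤ j := by exact_mod_cast hj
      linarith
  have Gtime : ∀ k j : ℕ, k ≤ j → ∀ t ≤ a k, ∀ q, G j (t, q) = G k (t, q) := by
    intro k j hkj t ht q
    induction j, hkj using Nat.le_induction with
    | base => rfl
    | succ j hj ih => rw [Ga j t (ht.trans (amono hj)), ih]
  let m : E n → ℕ := fun q => ⌈‖q‖⌉₊ + 2
  have hm : ∀ q, q ∈ ball (0 : E n) ((m q : ℝ) - 1) := by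
    intro q
    rw [mem_ball_zero_iff]
    have := Nat.le_ceil ‖q‖
    simp only [m]; push_cast; linarith
  let g : ℝ × E n → E n := fun z => G (m z.2) z
  have gG : ∀ k : ℕ, ∀ q ∈ ball (0 : E n) ((k : ℝ) - 1), ∀ t, g (t, q) = G k (t, q) := by
    intro k q hq t
    change G (m q) (t, q) = _
    rcases le_total k (m q) with h | h
    · exact Gstab k _ h q hq t
    · exact (Gstab _ k h q (hm q) t).symm
  have gf : ∀ q, g (1, q) = f q := by
    intro q
    change G (m q) (1, q) = _
    rw [Ge (m q) 1 (e1 (m q)) q, Hf]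
    exact ball_subset_ball (by linarith) (hm q)
  refine ⟨g, ⟨?_, ?_⟩, ?_, ?_, gf⟩
  · rw [contDiff_iff_contDiffAt]
    rintro ⟨t, q⟩
    refine (sG (m q)).contDiffAt.congr_of_eventuallyEq ?_
    have : ∀ᶠ z : ℝ × E n in 𝓝 (t, q), z.2 ∈ ball (0 : E n) ((m q : ℝ) - 1) :=
      continuous_snd.continuousAt.eventually (isOpen_ball.mem_nhds (hm q))
    filter_upwards [this] with z hz
    exact gG (m q) z.2 hz z.1
  · intro t ht
    rcases ht.2.lt_or_eq with h | rfl
    · obtain ⟨k, hk⟩ := exists_nat_gt (1 / (1 - t))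
      have hta : t ≤ a k := by
        have hpos : 0 < 1 - t := by linarith
        rw [div_lt_iff₀ hpos] at hk
        have : 1 / ((k : ℝ) + 3 / 2) ≤ 1 - t := by
          rw [div_le_iff₀ (by positivity)]
          nlinarith
        simp only [a]; linarith
      have : (fun q => g (t, q)) = fun q => G k (t, q) := by
        funext q
        change G (m q) (t, q) = _
        rcases le_total k (m q) with h' | h'
        · exact Gtime k _ h' t hta q
        · exact (Gstab _ k h' q (hm q) t).symm
      rw [this]
      exact dG k t
    · have : (fun q => g (1, q)) = f := funext gf
      rw [this]
      exact hf
  · intro t _ q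
    exact null_congr (q' := q) (Eventually.of_forall fun s => rfl) (nG (m q) t q)
  · intro q
    change G (m q) (0, q) = q
    exact Gtime 0 (m q) (Nat.zero_le _) 0 ((e0 0).trans (ea 0).le) q

/-- Every diffeomorphism of `ℝ^{2n+1}` (standard contact structure) that is
connected to the identity by a smooth path of diffeomorphisms is connected to the identity by a
null path of diffeomorphisms. -/
theorem null_path_to_any_diffeo (n : ℕ) (hn : 1 ≤ n) (f : E n → E n)
    (hf : IsDiffeo n f) (hconn : ConnToId n f) :
    ∃ g : ℝ × E n → E n, IsSmoothPath n g ∧ IsNullPath n g ∧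
      (∀ p, g (0, p) = p) ∧ (∀ p, g (1, p) = f p) := by
  obtain ⟨F, ⟨sF, dF⟩, F0, F1⟩ := hconn
  have hi : 0 < n := hn
  have hap : ∀ R : ℝ, ∃ h, IsDiffeo n h ∧ CSupp n h ∧
      ∀ q ∈ closedBall (0 : E n) R, h q = f q := by
    intro R
    obtain ⟨h, h1, h2, h3⟩ := compact_approx
      (Y := fun z => F (Real.smoothTransition z.1, z.2))
      (sF.comp ((Real.smoothTransition.contDiff.comp contDiff_fst).prodMk contDiff_snd))
      (fun t => dF _ ⟨Real.smoothTransition.nonneg t, Real.smoothTransition.le_one t⟩) R 0 1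
    refine ⟨h, h1, h2, fun q hq => ?_⟩
    have := h3 q hq
    simpa [F0, F1] using this
  obtain ⟨H, H0, dH, Hf, hN⟩ := exists_seq ⟨0, hi⟩ hap
  exact glue_seq hf H H0 dH Hf hN
end
end

section
/- Let n ≥ 1 and let (f_t)_{t∈[0,1]} be a smooth path of diffeomorphisms of ℝ^{2n+1} consisting of contactomorphisms of the standard contact structure, i.e. there is a smooth function ρ : [0,1] × ℝ^{2n+1} → ℝ with ρ > 0 such that α₀(f(t,p))(D_p f_t (v)) = ρ(t,p) · α₀(p)(v) for all t, p and all v ∈ ℝ^{2n+1}, where D_p f_t is the derivative of f_t at p. Suppose there is a compact set K₁ ⊂ ℝ^{2n+1} such that the path is positive outside K₁: α₀(f(t,q))(∂_t f(t,q)) > 0 for all t ∈ [0,1] and all q with f(t,q) ∉ K₁. Then there exist a compact set K₂ ⊇ K₁ and a positive smooth path of diffeomorphisms (g_t)_{t∈[0,1]} with g_0 = f_0, g_1 = f_1, and g(t,q) = f(t,q) for all t ∈ [0,1] and all q ∉ K₂. -/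
open Set Function

noncomputable section

lemma lip_of_compact {n : ℕ} (c : E n → ℝ) (h : ContDiff ℝ (⊤ : ℕ∞) c) (hc : HasCompactSupport c) :
    ∃ M : ℝ, 0 ≤ M ∧ ∀ p q, |c p - c q| ≤ M * ‖p - q‖ := by
  obtain ⟨M, hM⟩ := ContDiff.lipschitzWith_of_hasCompactSupport (n := (⊤ : ℕ∞)) hc h (by simp)
  refine ⟨M, M.2, fun p q => ?_⟩
  have := hM.dist_le_mul p q
  rwa [Real.dist_eq, dist_eq_norm] at this

lemma diffeo_of_lip {n : ℕ} (w : E n → E n) (hw : ContDiff ℝ (⊤ : ℕ∞) w)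
    (hl : ∀ p q, ‖w p - w q‖ ≤ 1/2 * ‖p - q‖) : IsDiffeo n (fun q => q + w q) := by
  have hs : ContDiff ℝ (⊤ : ℕ∞) (fun q => q + w q) := contDiff_id.add hw
  have happ : ApproximatesLinearOn (fun q => q + w q)
      ((ContinuousLinearEquiv.refl ℝ (E n) : E n →L[ℝ] E n)) univ (1/2) := by
    intro p _ q _
    have := hl p q
    simpa [add_sub_add_comm] using this
  have hlip : LipschitzWith (1/2) w := by
    apply LipschitzWith.of_dist_le_mul
    intro p q
    simpa [dist_eq_norm] using hl p q
  have hc : Subsingleton (E n) ∨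
      (1/2 : NNReal) < ‖((ContinuousLinearEquiv.refl ℝ (E n)).symm : E n →L[ℝ] E n)‖₊⁻¹ := by
    right
    have h1 : ‖((ContinuousLinearEquiv.refl ℝ (E n)).symm : E n →L[ℝ] E n)‖₊ = 1 := by
      have : ((ContinuousLinearEquiv.refl ℝ (E n)).symm : E n →L[ℝ] E n)
        = ContinuousLinearMap.id ℝ (E n) := rfl
      rw [this]
      ext
      simp
    rw [h1, inv_one]
    rw [← NNReal.coe_lt_coe]; push_cast; norm_num
  let H := happ.toHomeomorph _ hc
  have hH : ∀ q, H q = q + w q := fun q => rfl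
  refine ⟨hs, H.symm, ?_, fun q => H.symm_apply_apply q, fun q => H.apply_symm_apply q⟩
  rw [contDiff_iff_contDiffAt]
  intro a
  set p := H.symm a
  have hd : HasFDerivAt w (fderiv ℝ w p) p := (hw.differentiable (by simp) p).hasFDerivAt
  have hn : ‖fderiv ℝ w p‖ ≤ 1/2 := by
    simpa using norm_fderiv_le_of_lipschitz ℝ hlip (x₀ := p)
  have hn' : ‖-fderiv ℝ w p‖ < 1 := by rw [norm_neg]; linarith
  let e := ContinuousLinearEquiv.unitsEquiv ℝ (E n) (Units.oneSub _ hn')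
  have he : (e : E n →L[ℝ] E n) = ContinuousLinearMap.id ℝ (E n) + fderiv ℝ w p := by
    refine ContinuousLinearMap.ext fun v => ?_
    simp [e, Units.oneSub]
  have hd2 : HasFDerivAt (fun q => q + w q) (e : E n →L[ℝ] E n) p := by
    rw [he]; exact (hasFDerivAt_id p).add hd
  exact H.toOpenPartialHomeomorph.contDiffAt_symm (f₀' := e) (by simp) hd2 hs.contDiffAt

lemma α₀_add (n : ℕ) (p v w : E n) : α₀ n p (v + w) = α₀ n p v + α₀ n p w := by
  simp [α₀, mul_add, Finset.sum_add_distrib]; ring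

lemma exists_loop (n : ℕ) (i : Fin n) (C R : ℝ) (hC : 0 < C) :
    ∃ φ : ℝ × E n → E n, ContDiff ℝ (⊤ : ℕ∞) φ ∧ (∀ t, IsDiffeo n (fun p => φ (t, p))) ∧
      (∀ p, φ (0, p) = p) ∧ (∀ p, φ (1, p) = p) ∧
      (∃ R', ∀ t q, R' < ‖q‖ → φ (t, q) = q) ∧
      (∀ t q, 0 ≤ α₀ n (φ (t, q)) (pathDeriv n φ t q)) ∧
      (∀ t q, ‖φ (t, q)‖ ≤ R → C ≤ α₀ n (φ (t, q)) (pathDeriv n φ t q)) := by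
  let b : ContDiffBump (0 : E n) := ⟨1, 2, by norm_num, by norm_num⟩
  have hb : ContDiff ℝ (⊤ : ℕ∞) (b : E n → ℝ) := b.contDiff
  have hcs : HasCompactSupport (b : E n → ℝ) := b.hasCompactSupport
  have hx : ContDiff ℝ (⊤ : ℕ∞) (fun q : E n => q.1 i) := by fun_prop
  obtain ⟨M1, hM1, hl1⟩ := lip_of_compact b hb hcs
  obtain ⟨M2, hM2, hl2⟩ := lip_of_compact (fun q => q.1 i * b q) (hx.mul hb) (hcs.mul_left)
  obtain ⟨M3, hM3, hl3⟩ := lip_of_compact (fun q => b q * b q) (hb.mul hb) (hcs.mul_left)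
  obtain ⟨B, hB, hB4, hBM⟩ : ∃ B : ℝ, 0 < B ∧ B ≤ 1/4 ∧ M2 * B ≤ 1/4 := by
    refine ⟨1 / (4 * (M2 + 1)), by positivity, ?_, ?_⟩
    · rw [div_le_div_iff₀ (by positivity) (by norm_num)]; nlinarith
    · rw [mul_one_div, div_le_div_iff₀ (by positivity) (by norm_num)]; nlinarith
  obtain ⟨A, hA, hAB⟩ : ∃ A : ℝ, 0 < A ∧ A * B = C := ⟨C / B, by positivity, by field_simp⟩
  obtain ⟨L, hL, hL1, hL2⟩ : ∃ L : ℝ, 0 < L ∧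
      M1 * (2 * A + B) + M3 * (2 * C) ≤ L * (1/4) ∧
      2 * (R + (2 * A + B) + 2 * C) ≤ L := by
    refine ⟨max 1 (max (4 * (M1 * (2 * A + B) + M3 * (2 * C)))
      (2 * (R + (2 * A + B) + 2 * C))), ?_, ?_, ?_⟩
    · exact lt_of_lt_of_le one_pos (le_max_left _ _)
    · have := (le_max_left _ _).trans (le_max_right 1 (max (4 * (M1 * (2 * A + B) + M3 * (2 * C)))
        (2 * (R + (2 * A + B) + 2 * C))))
      linarith
    · exact (le_max_right _ _).trans (le_max_right _ _)
  let r : E n → ℝ := fun q => b (L⁻¹ • q)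
  let s : E n → ℝ := fun q => q.1 i * r q
  let u1 : ℝ → E n := fun t => (Pi.single i (A * (Real.cos (2 * Real.pi * t) - 1)),
    Pi.single i (B * Real.sin (2 * Real.pi * t)), 0)
  let u2 : ℝ → E n := fun t => (0, 0, - B * Real.sin (2 * Real.pi * t))
  let u3 : ℝ → E n := fun t => (0, 0, C * Real.sin (2 * Real.pi * t)
    - C / 4 * Real.sin (4 * Real.pi * t))
  have hr : ContDiff ℝ (⊤ : ℕ∞) r := hb.comp (contDiff_const_smul _)
  have hss : ContDiff ℝ (⊤ : ℕ∞) s := hx.mul hr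
  have hsin : ∀ c : ℝ, ContDiff ℝ (⊤ : ℕ∞) (fun t : ℝ => Real.sin (c * t)) := fun c => by fun_prop
  have hcos : ∀ c : ℝ, ContDiff ℝ (⊤ : ℕ∞) (fun t : ℝ => Real.cos (c * t)) := fun c => by fun_prop
  have hsing : ∀ g : ℝ → ℝ, ContDiff ℝ (⊤ : ℕ∞) g →
      ContDiff ℝ (⊤ : ℕ∞) (fun t => (Pi.single i (g t) : Fin n → ℝ)) := fun g hg =>
    (ContinuousLinearMap.single ℝ (fun _ : Fin n => ℝ) i).contDiff.comp hg
  have hu1 : ContDiff ℝ (⊤ : ℕ∞) u1 :=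
    (hsing _ (contDiff_const.mul ((hcos _).sub contDiff_const))).prodMk
      ((hsing _ (contDiff_const.mul (hsin _))).prodMk contDiff_const)
  have hu2 : ContDiff ℝ (⊤ : ℕ∞) u2 :=
    contDiff_const.prodMk (contDiff_const.prodMk (contDiff_const.mul (hsin _)))
  have hu3 : ContDiff ℝ (⊤ : ℕ∞) u3 :=
    contDiff_const.prodMk (contDiff_const.prodMk
      ((contDiff_const.mul (hsin _)).sub (contDiff_const.mul (hsin _))))
  have habs : ∀ x, |Real.sin x| ≤ 1 := Real.abs_sin_le_one
  have nu1 : ∀ t, ‖u1 t‖ ≤ 2 * A + B := fun t => by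
    have h1 : |Real.cos (2 * Real.pi * t) - 1| ≤ 2 := by
      rw [abs_le]; constructor <;> linarith [Real.cos_le_one (2 * Real.pi * t),
        Real.neg_one_le_cos (2 * Real.pi * t)]
    simp only [u1, Prod.norm_mk, Pi.norm_single, Real.norm_eq_abs, norm_zero, abs_mul,
      abs_of_pos hA, abs_of_pos hB]
    have := habs (2 * Real.pi * t)
    refine max_le ?_ (max_le ?_ ?_)
    · nlinarith
    · nlinarith
    · positivity
  have nu2 : ∀ t, ‖u2 t‖ ≤ B := fun t => by
    simp only [u2, Prod.norm_mk, Real.norm_eq_abs, norm_zero, abs_mul, abs_neg, abs_of_pos hB]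
    have := habs (2 * Real.pi * t)
    refine max_le hB.le (max_le hB.le ?_)
    nlinarith
  have nu3 : ∀ t, ‖u3 t‖ ≤ 2 * C := fun t => by
    simp only [u3, Prod.norm_mk, Real.norm_eq_abs, norm_zero]
    have h1 := abs_le.1 (habs (2 * Real.pi * t))
    have h2 := abs_le.1 (habs (4 * Real.pi * t))
    refine max_le (by positivity) (max_le (by positivity) ?_)
    rw [abs_le]; constructor <;> nlinarith
  let w : ℝ → E n → E n := fun t q => r q • u1 t + s q • u2 t + (r q * r q) • u3 t
  have hscale : ∀ p q : E n, ‖L⁻¹ • p - L⁻¹ • q‖ = L⁻¹ * ‖p - q‖ := fun p q => by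
    rw [← smul_sub, norm_smul, Real.norm_eq_abs, abs_of_pos (inv_pos.2 hL)]
  have lr : ∀ p q, |r p - r q| ≤ M1 * (L⁻¹ * ‖p - q‖) := fun p q => by
    rw [← hscale]; exact hl1 _ _
  have lr2 : ∀ p q, |r p * r p - r q * r q| ≤ M3 * (L⁻¹ * ‖p - q‖) := fun p q => by
    rw [← hscale]; exact hl3 _ _
  have ls : ∀ p q, |s p - s q| ≤ M2 * ‖p - q‖ := fun p q => by
    have h := hl2 (L⁻¹ • p) (L⁻¹ • q)
    rw [hscale] at h
    have e : s p - s q = L * ((L⁻¹ • p).1 i * b (L⁻¹ • p) - (L⁻¹ • q).1 i * b (L⁻¹ • q)) := by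
      simp only [s, r, Prod.smul_fst, Pi.smul_apply, smul_eq_mul]
      field_simp
    rw [e, abs_mul, abs_of_pos hL]
    calc _ ≤ L * (M2 * (L⁻¹ * ‖p - q‖)) := by gcongr
      _ = _ := by field_simp
  have lw : ∀ t p q, ‖w t p - w t q‖ ≤ 1/2 * ‖p - q‖ := fun t p q => by
    have e : w t p - w t q = (r p - r q) • u1 t + (s p - s q) • u2 t
        + (r p * r p - r q * r q) • u3 t := by
      simp only [w, sub_smul]; abel
    rw [e]
    refine (norm_add₃_le).trans ?_
    simp only [norm_smul, Real.norm_eq_abs]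
    have a1 := mul_le_mul (lr p q) (nu1 t) (norm_nonneg _) (by positivity)
    have a2 := mul_le_mul (ls p q) (nu2 t) (norm_nonneg _) (by positivity)
    have a3 := mul_le_mul (lr2 p q) (nu3 t) (norm_nonneg _) (by positivity)
    have hd := norm_nonneg (p - q)
    set d := ‖p - q‖
    have k1 : (M1 * (2 * A + B) + M3 * (2 * C)) * (L⁻¹ * d) ≤ L * (1/4) * (L⁻¹ * d) := by gcongr
    have k2 : L * (1/4) * (L⁻¹ * d) = 1/4 * d := by field_simp
    have k3 : M2 * B * d ≤ 1/4 * d := by gcongr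
    linarith
  have hφ : ContDiff ℝ (⊤ : ℕ∞) (fun z : ℝ × E n => z.2 + w z.1 z.2) := by
    have c1 := (hr.comp (contDiff_snd (E := ℝ))).smul (hu1.comp (contDiff_fst (F := E n)))
    have c2 := (hss.comp (contDiff_snd (E := ℝ))).smul (hu2.comp (contDiff_fst (F := E n)))
    have c3 := ((hr.mul hr).comp (contDiff_snd (E := ℝ))).smul
      (hu3.comp (contDiff_fst (F := E n)))
    exact contDiff_snd.add ((c1.add c2).add c3)
  have hder : ∀ t q, α₀ n (q + w t q) (pathDeriv n (fun z : ℝ × E n => z.2 + w z.1 z.2) t q)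
      = Real.pi * C * (r q * r q) := fun t q => by
    have lin : ∀ c : ℝ, HasDerivAt (fun t : ℝ => c * t) c t := fun c => by
      simpa using (hasDerivAt_id t).const_mul c
    have d1 : HasDerivAt (fun t => A * (Real.cos (2 * Real.pi * t) - 1))
        (A * (- Real.sin (2 * Real.pi * t) * (2 * Real.pi))) t :=
      (((lin _).cos).sub_const 1).const_mul A
    have d2 : HasDerivAt (fun t => B * (Real.sin (2 * Real.pi * t)))
        (B * (Real.cos (2 * Real.pi * t) * (2 * Real.pi))) t :=
      ((lin _).sin).const_mul B
    have d3 : HasDerivAt (fun t => - B * (Real.sin (2 * Real.pi * t)))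
        (- B * (Real.cos (2 * Real.pi * t) * (2 * Real.pi))) t :=
      ((lin _).sin).const_mul (-B)
    have d4 : HasDerivAt (fun t => C * Real.sin (2 * Real.pi * t)
          - C / 4 * Real.sin (4 * Real.pi * t))
        (C * (Real.cos (2 * Real.pi * t) * (2 * Real.pi))
          - C / 4 * (Real.cos (4 * Real.pi * t) * (4 * Real.pi))) t :=
      (((lin _).sin).const_mul C).sub (((lin _).sin).const_mul (C/4))
    have sg : ∀ (g : ℝ → ℝ) (g' : ℝ), HasDerivAt g g' t →
        HasDerivAt (fun t => (Pi.single i (g t) : Fin n → ℝ)) (Pi.single i g') t := fun g g' hg =>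
      (ContinuousLinearMap.single ℝ (fun _ : Fin n => ℝ) i).hasFDerivAt.comp_hasDerivAt t hg
    have v1 : HasDerivAt u1 _ t := (sg _ _ d1).prodMk ((sg _ _ d2).prodMk (hasDerivAt_const t (0:ℝ)))
    have v2 : HasDerivAt u2 _ t :=
      (hasDerivAt_const t (0:Fin n → ℝ)).prodMk ((hasDerivAt_const t (0:Fin n → ℝ)).prodMk d3)
    have v3 : HasDerivAt u3 _ t :=
      (hasDerivAt_const t (0:Fin n → ℝ)).prodMk ((hasDerivAt_const t (0:Fin n → ℝ)).prodMk d4)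
    have v := (((v1.const_smul (r q)).add (v2.const_smul (s q))).add
      (v3.const_smul (r q * r q))).const_add q
    have v' : HasDerivAt (fun t => q + w t q) _ t := v
    simp only [pathDeriv]
    rw [v'.deriv]
    have c4 : Real.cos (4 * Real.pi * t) = 2 * Real.cos (2 * Real.pi * t) ^ 2 - 1 := by
      rw [← Real.cos_two_mul]; ring_nf
    simp only [α₀, w, u1, u2, u3, s]
    simp [Pi.single_apply, c4]
    rw [← hAB]
    ring
  refine ⟨fun z => z.2 + w z.1 z.2, hφ, fun t => ?_, fun p => ?_, fun p => ?_, ⟨2 * L, ?_⟩, ?_, ?_⟩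
  · refine diffeo_of_lip (w t) ?_ (lw t)
    exact ((hr.smul contDiff_const).add (hss.smul contDiff_const)).add
      ((hr.mul hr).smul contDiff_const)
  · simp [w, u1, u2, u3]
  · have : Real.sin (4 * Real.pi) = 0 := by
      have := Real.sin_nat_mul_pi 4
      simpa using this
    simp [w, u1, u2, u3, this]
  · intro t q hq
    have h0 : r q = 0 := by
      apply b.zero_of_le_dist
      rw [dist_zero_right, norm_smul, Real.norm_eq_abs, abs_of_pos (inv_pos.2 hL)]
      change 2 ≤ _
      rw [le_inv_mul_iff₀ hL]; linarith
    simp [w, s, h0]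
  · intro t q
    rw [hder]
    have := mul_self_nonneg (r q)
    have := Real.pi_pos
    positivity
  · intro t q hq
    rw [hder]
    have hr0 : 0 ≤ r q := b.nonneg
    have hr1 : r q ≤ 1 := b.le_one
    have hxq : |q.1 i| ≤ ‖q‖ := (norm_le_pi_norm q.1 i).trans (norm_fst_le q)
    have hs1 : |s q| ≤ ‖q‖ := by
      simp only [s]
      rw [abs_mul, abs_of_nonneg hr0]
      nlinarith [abs_nonneg (q.1 i)]
    have hwn : ‖w t q‖ ≤ (2 * A + B) + B * ‖q‖ + 2 * C := by
      refine (norm_add₃_le).trans ?_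
      simp only [norm_smul, Real.norm_eq_abs]
      have a1 := mul_le_mul (abs_le.2 ⟨by linarith, hr1⟩ : |r q| ≤ 1) (nu1 t) (norm_nonneg _) (by positivity)
      have a2 := mul_le_mul hs1 (nu2 t) (norm_nonneg _) (by positivity)
      have a3 := mul_le_mul (abs_le.2 ⟨by nlinarith, by nlinarith⟩ : |r q * r q| ≤ 1) (nu3 t) (norm_nonneg _) (by positivity)
      linarith
    have hqn : ‖q‖ ≤ ‖q + w t q‖ + ‖w t q‖ := by
      have := norm_sub_le (q + w t q) (w t q)
      simpa using this
    have hBq : B * ‖q‖ ≤ 1/4 * ‖q‖ := by gcongr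
    have hqL : ‖q‖ ≤ L := by
      change ‖q + w t q‖ ≤ R at hq
      linarith [norm_nonneg q]
    have h1 : r q = 1 := by
      apply b.one_of_mem_closedBall
      rw [mem_closedBall_zero_iff, norm_smul, Real.norm_eq_abs, abs_of_pos (inv_pos.2 hL)]
      change _ ≤ 1
      rw [inv_mul_le_iff₀ hL]; linarith
    rw [h1]
    nlinarith [Real.pi_gt_three]

/-- The set of points which some `f_t` sends into a compact set is contained in a compact set. -/
lemma preimage_compact (n : ℕ) (f : ℝ × E n → E n) (hf : IsSmoothPath n f)
    (K₁ : Set (E n)) (hK₁ : IsCompact K₁) :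
    ∃ K : Set (E n), IsCompact K ∧ ∀ t ∈ Icc (0:ℝ) 1, ∀ q, f (t, q) ∈ K₁ → q ∈ K := by
  have hdf : ∀ z, HasFDerivAt f (fderiv ℝ f z) z := fun z =>
    (hf.1.differentiable (by simp) z).hasFDerivAt
  have key : ∀ z ∈ Icc (0:ℝ) 1 ×ˢ K₁, ∃ V ∈ nhdsWithin z (Icc (0:ℝ) 1 ×ˢ K₁), ∃ K : Set (E n), IsCompact K ∧
      ∀ t ∈ Icc (0:ℝ) 1, ∀ q, (t, f (t, q)) ∈ V → q ∈ K := by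
    rintro ⟨t, k⟩ ⟨ht, -⟩
    obtain ⟨hft, g, hg, hgl, hgr⟩ := hf.2 t ht
    set p := g k
    have hfp : f (t, p) = k := hgr k
    let F : ℝ × E n → ℝ × E n := fun z => (z.1, f z)
    let F' : (ℝ × E n) →L[ℝ] (ℝ × E n) :=
      (ContinuousLinearMap.fst ℝ ℝ (E n)).prod (fderiv ℝ f (t, p))
    have hF : ContDiff ℝ (⊤ : ℕ∞) F := contDiff_fst.prodMk hf.1
    have hF' : HasFDerivAt F F' (t, p) := hasFDerivAt_fst.prodMk (hdf _)
    have hinj : Injective F' := by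
      rw [injective_iff_map_eq_zero]
      rintro ⟨τ, v⟩ h
      have h1 : τ = 0 := congrArg Prod.fst h
      have h2 : fderiv ℝ f (t, p) (τ, v) = 0 := congrArg Prod.snd h
      subst h1
      have hpart : HasFDerivAt (fun q => f (t, q)) _ p :=
        (hdf (t, p)).comp p (hasFDerivAt_prodMk_right t p)
      have hgd : HasFDerivAt g (fderiv ℝ g (f (t, p))) (f (t, p)) :=
        (hg.differentiable (by simp) _).hasFDerivAt
      have hcomp := hgd.comp p hpart
      have hid : HasFDerivAt (g ∘ fun q => f (t, q)) (ContinuousLinearMap.id ℝ (E n)) p := by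
        rw [hgl.comp_eq_id]; exact hasFDerivAt_id p
      have := congrArg (fun T => T v) (hcomp.unique hid)
      simp [h2] at this
      simp [← this]
    let e : (ℝ × E n) ≃L[ℝ] (ℝ × E n) :=
      (LinearEquiv.ofInjectiveEndo F'.toLinearMap hinj).toContinuousLinearEquiv
    have he : (e : (ℝ × E n) →L[ℝ] (ℝ × E n)) = F' := by
      exact ContinuousLinearMap.ext fun v => rfl
    have hst : HasStrictFDerivAt F (e : (ℝ × E n) →L[ℝ] (ℝ × E n)) (t, p) := by
      rw [he]
      exact hF.contDiffAt.hasStrictFDerivAt' hF' (by simp)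
    have hmap : Filter.map F (nhds (t, p)) = nhds (F (t, p)) := hst.map_nhds_eq_of_equiv
    have hV : F '' (Metric.closedBall (t, p) 1) ∈ nhds (F (t, p)) := by
      rw [← hmap]
      exact Filter.image_mem_map (Metric.closedBall_mem_nhds _ one_pos)
    have hFk : F (t, p) = (t, k) := by simp [F, hfp]
    rw [hFk] at hV
    refine ⟨_, mem_nhdsWithin_of_mem_nhds hV, Prod.snd '' (Metric.closedBall (t, p) 1),
      (isCompact_closedBall _ _).image continuous_snd, ?_⟩
    rintro t' ht' q ⟨⟨t'', q'⟩, hmem, heq⟩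
    have h1 : t'' = t' := congrArg Prod.fst heq
    have h2 : f (t'', q') = f (t', q) := congrArg Prod.snd heq
    subst h1
    obtain ⟨-, g', -, hgl', -⟩ := hf.2 t'' ht'
    have : q' = q := hgl'.injective h2
    subst this
    exact ⟨_, hmem, rfl⟩
  have hcpt : IsCompact (Icc (0:ℝ) 1 ×ˢ K₁) := isCompact_Icc.prod hK₁
  obtain ⟨K, hK, h⟩ := hcpt.induction_on
    (p := fun V => ∃ K : Set (E n), IsCompact K ∧
      ∀ t ∈ Icc (0:ℝ) 1, ∀ q, (t, f (t, q)) ∈ V → q ∈ K)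
    ⟨∅, isCompact_empty, by simp⟩
    (fun V W hVW ⟨K, hK, h⟩ => ⟨K, hK, fun t ht q hq => h t ht q (hVW hq)⟩)
    (fun V W ⟨K, hK, h⟩ ⟨K', hK', h'⟩ => ⟨K ∪ K', hK.union hK', fun t ht q hq =>
      hq.elim (fun hq => Or.inl (h t ht q hq)) (fun hq => Or.inr (h' t ht q hq))⟩)
    (fun z hz => by obtain ⟨V, hV, h⟩ := key z hz; exact ⟨V, hV, h⟩)
  exact ⟨K, hK, fun t ht q hq => h t ht q ⟨ht, hq⟩⟩

/-- A path of contactomorphisms of `(ℝ^{2n+1}, ξ_std)` that is positive outside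
a compact set `K₁` can be modified inside a larger compact set `K₂` to an everywhere positive
path of diffeomorphisms with the same endpoints, coinciding with the original path outside
`K₂`. -/
theorem extension_of_positive_path (n : ℕ) (hn : 1 ≤ n) (f : ℝ × E n → E n)
    (hf : IsSmoothPath n f)
    (ρ : ℝ × E n → ℝ) (hρ : ContDiff ℝ (⊤ : ℕ∞) ρ)
    (hρpos : ∀ t ∈ Icc (0:ℝ) 1, ∀ p, 0 < ρ (t, p))
    (hcontacto : ∀ t ∈ Icc (0:ℝ) 1, ∀ p v,
      α₀ n (f (t, p)) (fderiv ℝ (fun q => f (t, q)) p v) = ρ (t, p) * α₀ n p v)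
    (K₁ : Set (E n)) (hK₁ : IsCompact K₁)
    (hpos : ∀ t ∈ Icc (0:ℝ) 1, ∀ q, f (t, q) ∉ K₁ →
      0 < α₀ n (f (t, q)) (pathDeriv n f t q)) :
    ∃ K₂ : Set (E n), IsCompact K₂ ∧ K₁ ⊆ K₂ ∧
      ∃ g : ℝ × E n → E n, IsSmoothPath n g ∧ IsPositivePath n g ∧
        (∀ p, g (0, p) = f (0, p)) ∧ (∀ p, g (1, p) = f (1, p)) ∧
        ∀ t ∈ Icc (0:ℝ) 1, ∀ q ∉ K₂, g (t, q) = f (t, q) := by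
  have hdf : ∀ z, HasFDerivAt f (fderiv ℝ f z) z := fun z =>
    (hf.1.differentiable (by simp) z).hasFDerivAt
  have hpd : ∀ t q, pathDeriv n f t q = fderiv ℝ f (t, q) (1, 0) := fun t q => by
    have : HasDerivAt (fun s => f (s, q)) (fderiv ℝ f (t, q) (1, 0)) t :=
      (hdf (t, q)).comp_hasDerivAt t ((hasDerivAt_id t).prodMk (hasDerivAt_const t q))
    exact this.deriv
  have hsd : ∀ t p v, fderiv ℝ (fun q => f (t, q)) p v = fderiv ℝ f (t, p) (0, v) := fun t p v => by
    have : HasFDerivAt (fun q => f (t, q)) _ p :=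
      (hdf (t, p)).comp p (hasFDerivAt_prodMk_right t p)
    rw [this.fderiv]; rfl
  obtain ⟨K, hK, hKf⟩ := preimage_compact n f hf K₁ hK₁
  -- a bound for the negative part
  have hcont : ContinuousOn (fun z : ℝ × E n =>
      α₀ n (f z) (fderiv ℝ f z (1, 0)) / ρ z) (Icc (0:ℝ) 1 ×ˢ K) := by
    have c0 : Continuous f := hf.1.continuous
    have c1 : Continuous (fun z => fderiv ℝ f z (1, 0)) :=
      (hf.1.continuous_fderiv (by simp)).clm_apply continuous_const
    have c2 : Continuous (fun z : ℝ × E n => α₀ n (f z) (fderiv ℝ f z (1, 0))) := by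
      unfold α₀
      fun_prop
    exact c2.continuousOn.div hρ.continuous.continuousOn
      (fun z hz => (hρpos z.1 hz.1 z.2).ne')
  obtain ⟨C, hCb⟩ := (isCompact_Icc.prod hK).exists_bound_of_continuousOn hcont
  obtain ⟨R, hR⟩ := hK.isBounded.exists_norm_le
  obtain ⟨R₁, hR₁⟩ := hK₁.isBounded.exists_norm_le
  obtain ⟨φ, hφ, hφd, hφ0, hφ1, ⟨R', hφR⟩, hφp, hφC⟩ :=
    exists_loop n ⟨0, hn⟩ (|C| + 1) R (by positivity)
  refine ⟨Metric.closedBall 0 (max R₁ R'), isCompact_closedBall _ _, fun p hp => ?_,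
    fun z => f (z.1, φ z), ⟨hf.1.comp (contDiff_fst.prodMk hφ), fun t ht => ?_⟩, ?_, ?_, ?_, ?_⟩
  · rw [mem_closedBall_zero_iff]; exact (hR₁ p hp).trans (le_max_left _ _)
  · obtain ⟨a, a', ha', al, ar⟩ := hf.2 t ht
    obtain ⟨c, c', hc', cl, cr⟩ := hφd t
    exact ⟨a.comp c, c' ∘ a', hc'.comp ha', al.comp cl, ar.comp cr⟩
  · intro t ht q
    have hφt : HasDerivAt (fun s => φ (s, q)) (pathDeriv n φ t q) t := by
      have : DifferentiableAt ℝ (fun s => φ (s, q)) t :=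
        ((hφ.comp (contDiff_id.prodMk contDiff_const)).differentiable (by simp) t :)
      exact this.hasDerivAt
    have hg : HasDerivAt (fun s => f (s, φ (s, q)))
        (fderiv ℝ f (t, φ (t, q)) (1, pathDeriv n φ t q)) t :=
      (hdf (t, φ (t, q))).comp_hasDerivAt t ((hasDerivAt_id t).prodMk hφt)
    have hg' : pathDeriv n (fun z => f (z.1, φ z)) t q = pathDeriv n f t (φ (t, q))
        + fderiv ℝ (fun q => f (t, q)) (φ (t, q)) (pathDeriv n φ t q) := by
      rw [hpd, hsd, ← map_add, Prod.mk_add_mk, add_zero, zero_add]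
      exact hg.deriv
    rw [hg', α₀_add, hcontacto t ht]
    have hρ0 := hρpos t ht (φ (t, q))
    by_cases hk : f (t, φ (t, q)) ∈ K₁
    · have hkK := hKf t ht _ hk
      have h1 := hφC t q (hR _ hkK)
      have h2 := hCb (t, φ (t, q)) ⟨ht, hkK⟩
      rw [Real.norm_eq_abs, ← hpd] at h2
      have h3 := (abs_le.1 h2).1
      rw [le_div_iff₀ hρ0] at h3
      have h4 := le_abs_self C
      have h5 := mul_le_mul_of_nonneg_left h1 hρ0.le
      change 0 < α₀ n (f (t, φ (t, q))) _ + _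
      nlinarith
    · have h1 := hpos t ht _ hk
      have h2 := mul_nonneg hρ0.le (hφp t q)
      change 0 < α₀ n (f (t, φ (t, q))) _ + _
      linarith
  · intro p; simp only [hφ0]
  · intro p; simp only [hφ1]
  · intro t ht q hq
    rw [mem_closedBall_zero_iff, not_le] at hq
    simp only [hφR t q ((le_max_right _ _).trans_lt hq)]
end
end
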